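/- (Equation (3.7).) Let a, b, s be positive integers with s < a, and let k_1, …, k_s be integers with 2 ≤ k_1 < k_2 < ⋯ < k_s ≤ a−1. Let q_1 < ⋯ < q_{a−s} be the increasing enumeration of {1,…,a} \ {a−k_1+1, …, a−k_s+1}. Then the number of lozenge tilings of H_{2a,2b}(k_1,…,k_s) invariant both under 180° rotation about the center and under reflection across the vertical symmetry axis is M_{⊙,|}(H_{2a,2b}(k_1,…,k_s)) = ∏_{j=1}^{a−s} C(a+b+q_j−1, 2q_j−1) · ∏_{1≤j<k≤a−s} (q_k−q_j)/(q_j+q_k−1), where C(n,r) denotes the binomial coefficient. -/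

import Mathlib

/-!
Geometric setup: the triangular lattice is drawn in the plane (identified with `ℝ × ℝ`)
so that one family of lattice lines is vertical.  Lattice vertices are generated by
`v1 = (√3/2, 1/2)` and `v2 = (0,1)`, anchored so that the bottom vertex of the western
vertical side of the hexagon is at the origin.

The hexagon with side lengths `a, a, 2b, a, a, 2b` (clockwise from the northwestern side)
then has vertices `(0,0)`, `(0,2b)`, `(a√3/2, a/2+2b)`, `(a√3, 2b)`, `(a√3, 0)`,
`(a√3/2, -a/2)`; its center is `(a√3/2, b)` and its horizontal symmetry axis is `y = b`.
-/

noncomputable section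

abbrev Pt : Type := ℝ × ℝ

namespace PP

/-- √3, the ratio of the long diagonal of a unit lozenge to its side. -/
def s3 : ℝ := Real.sqrt 3

/-- The vertices of the triangular lattice (one family of lattice lines vertical). -/
def triLattice : Set Pt :=
  {p | ∃ m n : ℤ, p = ((m : ℝ) * (s3 / 2), (m : ℝ) / 2 + (n : ℝ))}

/-- The six unit vectors along lattice directions. -/
def unitVecs : Set Pt :=
  {(0, 1), (0, -1), (s3 / 2, 1 / 2), (-(s3 / 2), -(1 / 2)),
    (s3 / 2, -(1 / 2)), (-(s3 / 2), 1 / 2)}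

/-- A (unit) lozenge of the triangular lattice: the union of two unit lattice triangles
sharing an edge, i.e. the convex hull of `p, p+u, p+v, p+u+v` for a lattice vertex `p`
and two distinct non-opposite lattice unit vectors `u, v`. -/
def IsLozenge (L : Set Pt) : Prop :=
  ∃ p u v : Pt, p ∈ triLattice ∧ u ∈ unitVecs ∧ v ∈ unitVecs ∧ u ≠ v ∧ u ≠ -v ∧
    L = convexHull ℝ {p, p + u, p + v, p + u + v}

/-- A lozenge tiling of a region `R`: a set of lozenges covering `R` whose interiors
are pairwise disjoint. -/
def IsLozengeTiling (R : Set Pt) (T : Set (Set Pt)) : Prop :=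
  (∀ L ∈ T, IsLozenge L) ∧ ⋃₀ T = R ∧
    ∀ L ∈ T, ∀ L' ∈ T, L ≠ L' → interior L ∩ interior L' = ∅

/-- The hexagon with side lengths `A, A, 2b, A, A, 2b`, clockwise from the NW side. -/
def hexagon (A b : ℕ) : Set Pt :=
  convexHull ℝ
    {((0 : ℝ), (0 : ℝ)), ((0 : ℝ), 2 * (b : ℝ)),
      ((A : ℝ) * (s3 / 2), (A : ℝ) / 2 + 2 * (b : ℝ)),
      ((A : ℝ) * s3, 2 * (b : ℝ)), ((A : ℝ) * s3, (0 : ℝ)),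
      ((A : ℝ) * (s3 / 2), -((A : ℝ) / 2))}

/-- The left-pointing triangular hole of side 2 whose vertical (right) side lies at
distance `2k` (in units of `√3` times half the lattice spacing, i.e. at `x = k√3`)
from the left side of the hexagon, centered on the horizontal symmetry axis `y = b`. -/
def leftHole (b k : ℕ) : Set Pt :=
  convexHull ℝ
    {((k : ℝ) * s3, (b : ℝ) - 1), ((k : ℝ) * s3, (b : ℝ) + 1), (((k : ℝ) - 1) * s3, (b : ℝ))}

/-- The mirror image of `leftHole b k` across the vertical symmetry axis of the hexagon:
a right-pointing triangular hole of side 2. -/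
def rightHole (A b k : ℕ) : Set Pt :=
  convexHull ℝ
    {(((A : ℝ) - k) * s3, (b : ℝ) - 1), (((A : ℝ) - k) * s3, (b : ℝ) + 1),
      (((A : ℝ) - k + 1) * s3, (b : ℝ))}

/-- The region `H_{A,2b}(k_1,…,k_s)`: the hexagon with side lengths `A, A, 2b, A, A, 2b`,
with the (open) triangular holes `leftHole (k i)` and their mirror images removed. -/
def Hreg (A b s : ℕ) (k : Fin s → ℕ) : Set Pt :=
  hexagon A b \ ⋃ i : Fin s, (interior (leftHole b (k i)) ∪ interior (rightHole A b (k i)))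

/-- The horizontal lattice rhombus of side `t` centered at the center `(A√3/2, b)`
of the hexagon. -/
def centralRhombus (A b t : ℕ) : Set Pt :=
  convexHull ℝ
    {((A : ℝ) * (s3 / 2) - (t : ℝ) * (s3 / 2), (b : ℝ)),
      ((A : ℝ) * (s3 / 2) + (t : ℝ) * (s3 / 2), (b : ℝ)),
      ((A : ℝ) * (s3 / 2), (b : ℝ) - (t : ℝ) / 2),
      ((A : ℝ) * (s3 / 2), (b : ℝ) + (t : ℝ) / 2)}

/-- The region `H_{A,2b}(k_1,…,k_s; t)`: `H_{A,2b}(k_1,…,k_s)` with the (open) central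
horizontal rhombus of side `t` also removed. -/
def HregC (A b s : ℕ) (k : Fin s → ℕ) (t : ℕ) : Set Pt :=
  Hreg A b s k \ interior (centralRhombus A b t)

/-- Rotation by `180°` about the center `(A√3/2, b)` of the hexagon. -/
def rot180 (A b : ℕ) (p : Pt) : Pt := ((A : ℝ) * s3 - p.1, 2 * (b : ℝ) - p.2)

/-- Reflection across the vertical symmetry axis `x = A√3/2` of the hexagon. -/
def reflV (A : ℕ) (p : Pt) : Pt := ((A : ℝ) * s3 - p.1, p.2)

/-- A tiling is invariant under rotation by `180°` about the center of the region. -/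
def RotInvariant (A b : ℕ) (T : Set (Set Pt)) : Prop :=
  ∀ L ∈ T, rot180 A b '' L ∈ T

/-- A tiling is invariant under reflection across the vertical symmetry axis. -/
def ReflInvariant (A : ℕ) (T : Set (Set Pt)) : Prop :=
  ∀ L ∈ T, reflV A '' L ∈ T

/-- `M_⊙(R)`: the number of lozenge tilings of `R` invariant under rotation by `180°`
about the center (of the hexagon with parameters `A`, `b` from which `R` was built). -/
def Mrot (A b : ℕ) (R : Set Pt) : ℕ :=
  Nat.card {T : Set (Set Pt) // IsLozengeTiling R T ∧ RotInvariant A b T}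

/-- `M_{⊙,|}(R)`: the number of lozenge tilings of `R` invariant both under rotation by
`180°` about the center and under reflection across the vertical symmetry axis. -/
def MrotRefl (A b : ℕ) (R : Set Pt) : ℕ :=
  Nat.card {T : Set (Set Pt) //
    IsLozengeTiling R T ∧ RotInvariant A b T ∧ ReflInvariant A T}

end PP

/-!
A tiling invariant under both symmetries is determined by its part in the upper left quadrant. Cut
that quadrant into vertical strips and record, for each vertical lattice line, the set of lozenges
crossing it. Within a strip the tiling is determined by the two sets on its borders, which have to
interlace, so symmetric tilings correspond to chains `∅ = C₀, …, C_{2a}` of interlacing sets, with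
`C_{2a}` arbitrary. Summing a minor over the column sets that interlace a given one replaces its
rows by their partial sums and adds a row of ones, except at a hole, where no row of ones is added.
Hence the number of chains ending at `C` is the minor with columns `C` of the matrix with entries
`C(x + q - 1, 2q - 2)` whose rows are indexed by `{1, …, a} \ {a - k_i + 1}`. The sum of all these
minors factors by induction on the number of columns; the induction step is Lagrange interpolation.
-/

namespace PP

/-! ### Summing minors of a binomial matrix -/

open Finset

section PairProduct

variable {ι K : Type*}

/-- With `P y = ∏ (y + x j) - ∏ (y - x j)`, of degree less than `#s`, this is Lagrange
interpolation of `P` at the nodes `x i`, where the second product vanishes. -/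
theorem sum_prod_add_mul_lagrange [Field K] [DecidableEq ι] {s : Finset ι} {x : ι → K}
    (hx : Set.InjOn x s) (y : K) :
    ∑ i ∈ s, (∏ j ∈ s, (x i + x j)) * ∏ j ∈ s.erase i, (y - x j) / (x i - x j)
      = ∏ j ∈ s, (y + x j) - ∏ j ∈ s, (y - x j) := by
  set P : Polynomial K :=
    ∏ j ∈ s, (Polynomial.X + Polynomial.C (x j)) - ∏ j ∈ s, (Polynomial.X - Polynomial.C (x j))
    with hP
  have eval_P (z : K) : P.eval z = ∏ j ∈ s, (z + x j) - ∏ j ∈ s, (z - x j) := by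
    simp [hP, Polynomial.eval_prod]
  have degree_P : P.degree < #s := by
    have monic_add := Polynomial.monic_prod_of_monic s (fun j ↦ Polynomial.X + Polynomial.C (x j))
      fun j _ ↦ Polynomial.monic_X_add_C (x j)
    have monic_sub := Polynomial.monic_prod_of_monic s (fun j ↦ Polynomial.X - Polynomial.C (x j))
      fun j _ ↦ Polynomial.monic_X_sub_C (x j)
    have degree_add : (∏ j ∈ s, (Polynomial.X + Polynomial.C (x j))).degree = (#s : WithBot ℕ) := by
      simp [Polynomial.degree_prod]
    have degree_sub : (∏ j ∈ s, (Polynomial.X - Polynomial.C (x j))).degree = (#s : WithBot ℕ) := by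
      simp [Polynomial.degree_prod]
    exact degree_add ▸ Polynomial.degree_sub_lt_left (degree_add.trans degree_sub.symm)
      monic_add.ne_zero (monic_add.leadingCoeff.trans monic_sub.leadingCoeff.symm)
  rw [← eval_P, Lagrange.eq_interpolate hx degree_P, Lagrange.interpolate_apply,
    Polynomial.eval_finsetSum]
  refine sum_congr rfl fun i hi ↦ ?_
  have hvanish : ∏ j ∈ s, (x i - x j) = 0 := prod_eq_zero hi (sub_self _)
  rw [Polynomial.eval_mul, Polynomial.eval_C, eval_P, hvanish, sub_zero, Lagrange.basis,
    Polynomial.eval_prod]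
  congr 1
  refine prod_congr rfl fun j _ ↦ ?_
  simp [Lagrange.basisDivisor, div_eq_inv_mul]

variable [LinearOrder ι] [CommRing K]

/-- The product of `f i j` over the pairs `i < j` of elements of `s`. -/
def pairProd (f : ι → ι → K) (s : Finset ι) : K :=
  ∏ p ∈ s ×ˢ s with p.1 < p.2, f p.1 p.2

theorem pairProd_eq_prod_ite (f : ι → ι → K) (s : Finset ι) :
    pairProd f s = ∏ i ∈ s, ∏ j ∈ s, if i < j then f i j else 1 := by
  rw [pairProd, prod_filter, prod_product]

theorem pairProd_image {κ : Type*} [LinearOrder κ] (f : ι → ι → K) {g : κ → ι} (hg : StrictMono g)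
    (s : Finset κ) : pairProd f (s.image g) = pairProd (fun i j ↦ f (g i) (g j)) s := by
  simp only [pairProd_eq_prod_ite, prod_image hg.injective.injOn, hg.lt_iff_lt]

theorem pairProd_eq_erase_mul {f : ι → ι → K} (hf : ∀ i j, f j i = -f i j) {s : Finset ι} {i : ι}
    (hi : i ∈ s) :
    pairProd f s
      = (-1) ^ #{j ∈ s | i < j} * pairProd f (s.erase i) * ∏ j ∈ s.erase i, f j i := by
  have sign : (-1 : K) ^ #{j ∈ s | i < j} = ∏ j ∈ s.erase i, if i < j then (-1 : K) else 1 := by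
    rw [prod_ite, prod_const, prod_const_one, mul_one]
    congr 2
    rw [filter_erase, erase_eq_of_notMem (by simp)]
  have split (g : ι → K) : ∏ j ∈ s, g j = g i * ∏ j ∈ s.erase i, g j :=
    (mul_prod_erase s g hi).symm
  have cross : (∏ j ∈ s.erase i, if i < j then f i j else 1)
      * (∏ j ∈ s.erase i, if j < i then f j i else 1)
      = (∏ j ∈ s.erase i, if i < j then (-1 : K) else 1) * ∏ j ∈ s.erase i, f j i := by
    rw [← prod_mul_distrib, ← prod_mul_distrib]
    refine prod_congr rfl fun j hj ↦ ?_
    rcases lt_or_gt_of_ne (ne_of_mem_erase hj) with h | h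
    · simp [h, h.not_gt]
    · simp [h, h.not_gt, hf i j]
  rw [pairProd_eq_prod_ite, pairProd_eq_prod_ite, sign]
  simp only [split, lt_irrefl, if_false, one_mul, prod_mul_distrib]
  rw [← mul_assoc, cross, mul_right_comm]

end PairProduct

section AltDet

variable {α β R : Type*} [LinearOrder α] [LinearOrder β] [CommRing R]

/-- The minor of the matrix `F` with rows `Q` and columns `C`, both taken in increasing order;
it is `0` when `Q` and `C` have different sizes. -/
def altDet (F : α → β → R) (Q : Finset α) (C : Finset β) : R :=
  if h : #Q = #C then
    Matrix.det (Matrix.of fun i l : Fin #C ↦ F (Q.orderEmbOfFin h i) (C.orderEmbOfFin rfl l))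
  else 0

theorem altDet_of_card_ne (F : α → β → R) {Q : Finset α} {C : Finset β} (h : #Q ≠ #C) :
    altDet F Q C = 0 :=
  dif_neg h

theorem exists_strictMono_image_eq {n : ℕ} {C : Finset α} (h : #C = n) :
    ∃ c : Fin n → α, StrictMono c ∧ univ.image c = C :=
  ⟨C.orderEmbOfFin h, (C.orderEmbOfFin h).strictMono, image_orderEmbOfFin_univ C h⟩

theorem card_image_univ_of_strictMono {n : ℕ} {c : Fin n → α} (hc : StrictMono c) :
    #(univ.image c) = n := by
  rw [card_image_of_injective _ hc.injective, card_univ, Fintype.card_fin]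

theorem orderEmbOfFin_image {n : ℕ} {c : Fin n → α} (hc : StrictMono c)
    (h : #(univ.image c) = n) : ⇑((univ.image c).orderEmbOfFin h) = c :=
  (orderEmbOfFin_unique h (fun i ↦ mem_image_of_mem c (mem_univ i)) hc).symm

theorem altDet_image (F : α → β → R) {n : ℕ} {q : Fin n → α} {c : Fin n → β} (hq : StrictMono q)
    (hc : StrictMono c) :
    altDet F (univ.image q) (univ.image c) = Matrix.det (Matrix.of fun i l ↦ F (q i) (c l)) := by
  have altDet_eq (Q : Finset α) (C : Finset β) (hQ : #Q = n) (hC : #C = n) :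
      altDet F Q C
        = Matrix.det (Matrix.of fun i l ↦ F (Q.orderEmbOfFin hQ i) (C.orderEmbOfFin hC l)) := by
    subst hC
    exact dif_pos hQ
  rw [altDet_eq _ _ (card_image_univ_of_strictMono hq) (card_image_univ_of_strictMono hc),
    orderEmbOfFin_image hq, orderEmbOfFin_image hc]

theorem altDet_empty_empty (F : α → β → R) : altDet F ∅ ∅ = 1 := by
  exact (dif_pos rfl).trans Matrix.det_fin_zero

theorem altDet_congr {F G : α → β → R} {Q : Finset α} {C : Finset β}
    (h : ∀ q ∈ Q, ∀ c ∈ C, F q c = G q c) : altDet F Q C = altDet G Q C := by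
  simp only [altDet, h _ (orderEmbOfFin_mem _ _ _) _ (orderEmbOfFin_mem _ _ _)]

theorem altDet_image_image {α' β' : Type*} [LinearOrder α'] [LinearOrder β'] (F : α' → β' → R)
    {g : α → α'} {h : β → β'} (hg : StrictMono g) (hh : StrictMono h) (Q : Finset α)
    (C : Finset β) :
    altDet F (Q.image g) (C.image h) = altDet (fun q c ↦ F (g q) (h c)) Q C := by
  by_cases hcard : #Q = #C
  · obtain ⟨n, hn⟩ : ∃ n, #C = n := ⟨_, rfl⟩
    obtain ⟨q, hq, rfl⟩ := exists_strictMono_image_eq (hcard.trans hn)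
    obtain ⟨c, hc, rfl⟩ := exists_strictMono_image_eq hn
    rw [image_image, image_image, altDet_image _ (hg.comp hq) (hh.comp hc), altDet_image _ hq hc]
    rfl
  · rw [altDet_of_card_ne _ hcard, altDet_of_card_ne]
    rwa [card_image_of_injective _ hg.injective, card_image_of_injective _ hh.injective]

theorem image_cons {n : ℕ} (a : α) (c : Fin n → α) :
    univ.image (Fin.cons a c : Fin (n + 1) → α) = insert a (univ.image c) := by
  ext x
  simp [Fin.exists_fin_succ, eq_comm]

theorem altDet_insert_insert (F : α → β → R) {Q : Finset α} {C : Finset β} {q₀ : α} {c₀ : β}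
    (hQ : ∀ q ∈ Q, q₀ < q) (hC : ∀ c ∈ C, c₀ < c) (hF : ∀ q ∈ Q, F q c₀ = 0) :
    altDet F (insert q₀ Q) (insert c₀ C) = F q₀ c₀ * altDet F Q C := by
  have hq₀ : q₀ ∉ Q := fun h ↦ lt_irrefl _ (hQ _ h)
  have hc₀ : c₀ ∉ C := fun h ↦ lt_irrefl _ (hC _ h)
  by_cases hcard : #Q = #C
  · obtain ⟨n, hn⟩ : ∃ n, #C = n := ⟨_, rfl⟩
    obtain ⟨q, hq, rfl⟩ := exists_strictMono_image_eq (hcard.trans hn)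
    obtain ⟨c, hc, rfl⟩ := exists_strictMono_image_eq hn
    simp only [mem_image, mem_univ, true_and, forall_exists_index, forall_apply_eq_imp_iff]
      at hQ hC hF
    rw [← image_cons, ← image_cons, altDet_image _ (Fin.strictMono_cons.mpr ⟨hQ, hq⟩)
      (Fin.strictMono_cons.mpr ⟨hC, hc⟩), altDet_image _ hq hc, Matrix.det_succ_column_zero,
      Fin.sum_univ_succ]
    simp only [Matrix.of_apply, Fin.cons_zero, Fin.cons_succ, hF, mul_zero, zero_mul,
      sum_const_zero, add_zero, Fin.val_zero, pow_zero, one_mul]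
    rfl
  · rw [altDet_of_card_ne _ hcard, altDet_of_card_ne, mul_zero]
    rwa [card_insert_of_notMem hq₀, card_insert_of_notMem hc₀, Ne, add_left_inj]

theorem altDet_of_column_eq_zero {F : α → β → R} {Q : Finset α} {C : Finset β} {c : β}
    (hc : c ∈ C) (hF : ∀ q ∈ Q, F q c = 0) : altDet F Q C = 0 := by
  rw [altDet]
  split_ifs with h
  · obtain ⟨l, hl⟩ : c ∈ Set.range (C.orderEmbOfFin rfl) := by rwa [range_orderEmbOfFin]
    refine Matrix.det_eq_zero_of_column_eq_zero l fun i ↦ ?_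
    rw [Matrix.of_apply, hl, hF _ (orderEmbOfFin_mem _ _ _)]
  · rfl

theorem strictMono_snoc {n : ℕ} {c : Fin n → α} (hc : StrictMono c) {a : α} (ha : ∀ i, c i < a) :
    StrictMono (Fin.snoc c a : Fin (n + 1) → α) := by
  intro i j hij
  cases j using Fin.lastCases with
  | last =>
    cases i using Fin.lastCases with
    | last => exact absurd hij (lt_irrefl _)
    | cast i => simpa using ha i
  | cast j =>
    cases i using Fin.lastCases with
    | last => exact absurd hij (not_lt.mpr (Fin.le_last _))
    | cast i => simpa using hc (by simpa using hij)

theorem image_snoc {n : ℕ} (c : Fin n → α) (a : α) :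
    univ.image (Fin.snoc c a : Fin (n + 1) → α) = insert a (univ.image c) := by
  ext x
  simp [Fin.exists_fin_succ', or_comm, eq_comm]

theorem image_succAbove {n : ℕ} {q : Fin (n + 1) → α} (hq : StrictMono q) (i : Fin (n + 1)) :
    univ.image (fun j ↦ q (i.succAbove j)) = (univ.image q).erase (q i) := by
  rw [← image_erase hq.injective, ← compl_singleton, ← Fin.image_succAbove_univ, image_image]
  rfl

theorem card_filter_lt_image {n : ℕ} {q : Fin (n + 1) → α} (hq : StrictMono q) (i : Fin (n + 1)) :
    #{p ∈ univ.image q | q i < p} = n - i := by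
  rw [filter_image, card_image_of_injective _ hq.injective]
  simp only [hq.lt_iff_lt]
  rw [filter_lt_eq_Ioi, Fin.card_Ioi]
  omega

theorem altDet_insert_last (F : α → β → R) (Q : Finset α) {C : Finset β} {N : β}
    (hN : ∀ c ∈ C, c < N) :
    altDet F Q (insert N C)
      = ∑ q ∈ Q, (-1) ^ #{p ∈ Q | q < p} * F q N * altDet F (Q.erase q) C := by
  have hNC : N ∉ C := fun h ↦ lt_irrefl N (hN N h)
  by_cases hQ : #Q = #C + 1
  · obtain ⟨n, hn⟩ : ∃ n, #C = n := ⟨_, rfl⟩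
    obtain ⟨q, hq, rfl⟩ := exists_strictMono_image_eq (hn ▸ hQ)
    obtain ⟨c, hc, rfl⟩ := exists_strictMono_image_eq hn
    have hlt (i) : c i < N := hN _ (mem_image_of_mem c (mem_univ i))
    rw [← image_snoc, altDet_image F hq (strictMono_snoc hc hlt),
      Matrix.det_succ_column _ (Fin.last _), sum_image hq.injective.injOn]
    refine sum_congr rfl fun i _ ↦ ?_
    have minor : altDet F ((univ.image q).erase (q i)) (univ.image c)
        = Matrix.det (Matrix.of fun j l ↦ F (q (i.succAbove j)) (c l)) := by
      rw [← image_succAbove hq i]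
      exact altDet_image F (hq.comp (Fin.strictMono_succAbove i)) hc
    have sign : (-1 : R) ^ (n - i.val) = (-1) ^ (i.val + n) := by
      obtain ⟨t, ht⟩ := Nat.exists_eq_add_of_le (Nat.lt_succ_iff.mp i.isLt)
      simp [ht, ← add_assoc, ← two_mul, pow_add, pow_mul]
    rw [card_filter_lt_image hq, minor, sign]
    congr 1
    · simp
    · congr 1
      ext j l
      simp
  · rw [altDet_of_card_ne F (by rwa [card_insert_of_notMem hNC])]
    refine (sum_eq_zero fun q hq ↦ ?_).symm
    rw [altDet_of_card_ne F, mul_zero]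
    have := card_erase_add_one hq
    omega

end AltDet

/-- The matrix entry `C(x + q - 1, 2q - 2)`, an even function of `x + 1/2` for `1 ≤ q`. -/
def evenChoose (q x : ℕ) : ℚ := ((x + q - 1).choose (2 * q - 2) : ℕ)

/-- The partial sum `C(N + q - 1, 2q - 1)` of `evenChoose q`, an odd function of `N`. -/
def oddChoose (q N : ℕ) : ℚ := ((N + q - 1).choose (2 * q - 1) : ℕ)

theorem oddChoose_succ {q : ℕ} (hq : 1 ≤ q) (N : ℕ) :
    oddChoose q (N + 1) = oddChoose q N + evenChoose q N := by
  obtain ⟨t, rfl⟩ := Nat.exists_eq_add_of_le' hq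
  have h1 : N + 1 + (t + 1) - 1 = N + t + 1 := by omega
  have h2 : 2 * (t + 1) - 1 = 2 * t + 1 := by omega
  have h3 : 2 * (t + 1) - 2 = 2 * t := by omega
  rw [oddChoose, oddChoose, evenChoose, h1, h2, h3, Nat.choose_succ_succ, Nat.cast_add]
  exact add_comm _ _

theorem oddChoose_mul {q : ℕ} (hq : 1 ≤ q) (N : ℕ) :
    oddChoose q N * (2 * q - 1) = evenChoose q N * (N + 1 - q) := by
  obtain ⟨t, rfl⟩ := Nat.exists_eq_add_of_le' hq
  have h2 : 2 * (t + 1) - 1 = 2 * t + 1 := by omega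
  have h3 : 2 * (t + 1) - 2 = 2 * t := by omega
  simp only [oddChoose, evenChoose, h2, h3, ← add_assoc, Nat.add_sub_cancel]
  rcases le_or_gt t N with h | h
  · obtain ⟨u, rfl⟩ := Nat.exists_eq_add_of_le h
    have key := Nat.choose_succ_right_eq (t + u + t) (2 * t)
    rw [show t + u + t - 2 * t = u by omega] at key
    have key' : ((t + u + t).choose (2 * t + 1) : ℚ) * (2 * t + 1)
        = (t + u + t).choose (2 * t) * u := by exact_mod_cast key
    push_cast
    linear_combination key'
  · simp [Nat.choose_eq_zero_of_lt (show N + t < 2 * t by omega),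
      Nat.choose_eq_zero_of_lt (show N + t < 2 * t + 1 by omega)]

theorem oddChoose_succ_mul {q : ℕ} (hq : 1 ≤ q) (N : ℕ) :
    oddChoose q (N + 1) * (2 * q - 1) = evenChoose q N * (N + q) := by
  rw [oddChoose_succ hq]
  linear_combination oddChoose_mul hq N

theorem sum_evenChoose {q : ℕ} (hq : 1 ≤ q) (N : ℕ) :
    ∑ x ∈ range N, evenChoose q x = oddChoose q N := by
  induction N with
  | zero =>
    simp [oddChoose, Nat.choose_eq_zero_of_lt (show q - 1 < 2 * q - 1 by omega)]
  | succ N ih => rw [sum_range_succ, ih, oddChoose_succ hq]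

/-- The interaction factor `(q - p) / (p + q - 1)` of two rows. -/
def rowFactor (p q : ℕ) : ℚ := (q - p) / (p + q - 1)

theorem rowFactor_comm (p q : ℕ) : rowFactor q p = -rowFactor p q := by
  rw [rowFactor, rowFactor, ← neg_div]
  congr 1 <;> ring

theorem two_mul_sub_one_pos {q : ℕ} (hq : 1 ≤ q) : (0 : ℚ) < 2 * q - 1 := by
  have : (1 : ℚ) ≤ q := by exact_mod_cast hq
  linarith

/-- Lagrange interpolation at the nodes `q - 1/2`, evaluated at `N + 1/2`. -/
theorem prod_oddChoose_succ {Q : Finset ℕ} (hQ : ∀ q ∈ Q, 1 ≤ q) (N : ℕ) :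
    (∏ q ∈ Q, oddChoose q (N + 1)) = (∏ q ∈ Q, oddChoose q N) + ∑ q ∈ Q,
      evenChoose q N * (∏ p ∈ Q.erase q, oddChoose p N) * ∏ p ∈ Q.erase q, (rowFactor p q)⁻¹ := by
  have lagrange := sum_prod_add_mul_lagrange (s := Q) (x := fun q : ℕ ↦ (q : ℚ) - 1 / 2)
    (fun p _ q _ h ↦ by simpa using h) (N + 1 / 2)
  have prod_oddChoose : ∀ S ⊆ Q, ∏ p ∈ S, oddChoose p N
      = (∏ p ∈ S, evenChoose p N / (2 * p - 1)) * ∏ p ∈ S, ((N : ℚ) + 1 / 2 - (p - 1 / 2)) := by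
    intro S hS
    rw [← prod_mul_distrib]
    refine prod_congr rfl fun p hp ↦ ?_
    have hne := (two_mul_sub_one_pos (hQ p (hS hp))).ne'
    rw [eq_comm, div_mul_eq_mul_div, div_eq_iff hne, oddChoose_mul (hQ p (hS hp))]
    ring
  have prod_oddChoose_succ : ∏ p ∈ Q, oddChoose p (N + 1)
      = (∏ p ∈ Q, evenChoose p N / (2 * p - 1)) * ∏ p ∈ Q, ((N : ℚ) + 1 / 2 + (p - 1 / 2)) := by
    rw [← prod_mul_distrib]
    refine prod_congr rfl fun p hp ↦ ?_
    have hne := (two_mul_sub_one_pos (hQ p hp)).ne'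
    rw [eq_comm, div_mul_eq_mul_div, div_eq_iff hne, oddChoose_succ_mul (hQ p hp)]
    ring
  rw [prod_oddChoose_succ, prod_oddChoose Q subset_rfl, ← sub_eq_iff_eq_add', ← mul_sub, ← lagrange,
    mul_sum]
  refine sum_congr rfl fun q hq ↦ ?_
  have hne := (two_mul_sub_one_pos (hQ q hq)).ne'
  rw [prod_oddChoose _ (erase_subset q Q), ← mul_prod_erase Q _ hq, ← mul_prod_erase Q _ hq,
    prod_div_distrib (s := Q.erase q) (f := fun p : ℕ ↦ (N : ℚ) + 1 / 2 - (p - 1 / 2))]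
  have factors : ∏ p ∈ Q.erase q, (rowFactor p q)⁻¹ = (∏ p ∈ Q.erase q, ((q : ℚ) - 1 / 2
      + (p - 1 / 2))) / ∏ p ∈ Q.erase q, ((q : ℚ) - 1 / 2 - (p - 1 / 2)) := by
    rw [← prod_div_distrib]
    refine prod_congr rfl fun p _ ↦ ?_
    rw [rowFactor, inv_div]
    congr 1 <;> ring
  rw [factors]
  field_simp
  ring

theorem sum_altDet_evenChoose {Q : Finset ℕ} (hQ : ∀ q ∈ Q, 1 ≤ q) (N : ℕ) :
    ∑ C ∈ (range N).powerset, altDet evenChoose Q C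
      = (∏ q ∈ Q, oddChoose q N) * pairProd rowFactor Q := by
  induction N generalizing Q with
  | zero =>
    rw [range_zero, powerset_empty, sum_singleton]
    rcases Q.eq_empty_or_nonempty with rfl | ⟨q, hq⟩
    · simp [altDet_empty_empty, pairProd]
    · have : oddChoose q 0 = 0 := by rw [← sum_evenChoose (hQ q hq), range_zero, sum_empty]
      rw [prod_eq_zero hq this, zero_mul, altDet_of_card_ne]
      exact (card_pos.mpr ⟨q, hq⟩).ne'
  | succ N ih =>
    have expand : ∀ C ∈ (range N).powerset, altDet evenChoose Q (insert N C) = ∑ q ∈ Q,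
        (-1) ^ #{p ∈ Q | q < p} * evenChoose q N * altDet evenChoose (Q.erase q) C :=
      fun C hC ↦ altDet_insert_last _ Q fun c hc ↦ mem_range.mp (mem_powerset.mp hC hc)
    rw [range_add_one, sum_powerset_insert notMem_range_self, ih hQ, sum_congr rfl expand, sum_comm,
      prod_oddChoose_succ hQ, add_mul, sum_mul]
    congr 1
    refine sum_congr rfl fun q hq ↦ ?_
    have hne : ∏ p ∈ Q.erase q, rowFactor p q ≠ 0 := by
      refine prod_ne_zero_iff.mpr fun p hp ↦ ?_
      have hpq : (p : ℚ) ≠ q := Nat.cast_injective.ne (ne_of_mem_erase hp)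
      have h1 := two_mul_sub_one_pos (hQ q hq)
      have h2 := two_mul_sub_one_pos (hQ p (mem_of_mem_erase hp))
      exact div_ne_zero (sub_ne_zero.mpr hpq.symm) (by linarith)
    rw [← mul_sum, ih fun p hp ↦ hQ p (mem_of_mem_erase hp),
      pairProd_eq_erase_mul rowFactor_comm hq, prod_inv_distrib]
    field_simp

/-! ### Interlacing sets -/

/-- `A` and `B` interlace with `A` first: their increasing enumerations satisfy
`a₀ ≤ b₀ < a₁ ≤ b₁ < ⋯`. Counting elements below `x` states this without naming the lengths. -/
def Interlaces (A B : Finset ℕ) : Prop :=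
  ∀ x, Nat.count (· ∈ B) x ≤ Nat.count (· ∈ A) x ∧
    Nat.count (· ∈ A) (x + 1) ≤ Nat.count (· ∈ B) x + 1

theorem count_mem_eq_card {C : Finset ℕ} {M : ℕ} (hC : C ⊆ range M) :
    Nat.count (· ∈ C) M = #C := by
  rw [Nat.count_eq_card_filter_range, filter_mem_eq_inter, inter_eq_right.mpr hC]

theorem count_mem_le_card (C : Finset ℕ) (x : ℕ) : Nat.count (· ∈ C) x ≤ #C := by
  rw [Nat.count_eq_card_filter_range, filter_mem_eq_inter]
  exact card_le_card inter_subset_right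

theorem lt_count_image_iff {n : ℕ} {c : Fin n → ℕ} (hc : StrictMono c) (i : Fin n) (x : ℕ) :
    (i : ℕ) < Nat.count (· ∈ univ.image c) x ↔ c i < x := by
  have count_eq : Nat.count (· ∈ univ.image c) x = #{j | c j < x} := by
    rw [Nat.count_eq_card_filter_range, ← card_image_of_injective _ hc.injective]
    congr 1
    ext y
    simp only [mem_filter, mem_range, mem_image, mem_univ, true_and]
    constructor
    · rintro ⟨hy, j, rfl⟩
      exact ⟨j, hy, rfl⟩
    · rintro ⟨j, hj, rfl⟩
      exact ⟨hj, j, rfl⟩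
  rw [count_eq]
  constructor
  · intro h
    by_contra hx
    have hsub : ({j | c j < x} : Finset (Fin n)) ⊆ Iio i := fun j hj ↦
      mem_Iio.mpr (hc.lt_iff_lt.mp ((mem_filter.mp hj).2.trans_le (not_lt.mp hx)))
    exact absurd (card_le_card hsub) (by rwa [Fin.card_Iio, not_le])
  · intro h
    have hsub : Iic i ⊆ ({j | c j < x} : Finset (Fin n)) := fun j hj ↦
      mem_filter.mpr ⟨mem_univ j, (hc.monotone (mem_Iic.mp hj)).trans_lt h⟩
    simpa [Fin.card_Iic] using card_le_card hsub

theorem interlaces_image_iff {n : ℕ} {a : Fin (n + 1) → ℕ} {b : Fin n → ℕ} (ha : StrictMono a)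
    (hb : StrictMono b) :
    Interlaces (univ.image a) (univ.image b)
      ↔ ∀ l : Fin n, a l.castSucc ≤ b l ∧ b l < a l.succ := by
  have le_a := fun x ↦ count_mem_le_card (univ.image a) x
  have le_b := fun x ↦ count_mem_le_card (univ.image b) x
  rw [card_image_univ_of_strictMono ha] at le_a
  rw [card_image_univ_of_strictMono hb] at le_b
  constructor
  · intro h l
    constructor
    · by_contra hlt
      have h1 := (lt_count_image_iff hb l _).mpr (not_le.mp hlt)
      have h2 := (lt_count_image_iff ha l.castSucc _).mp (h1.trans_le (h _).1)
      exact lt_irrefl _ h2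
    · rw [← lt_count_image_iff hb]
      have h1 := (lt_count_image_iff ha l.succ _).mpr (Nat.lt_succ_self _)
      rw [Fin.val_succ] at h1
      exact Nat.succ_lt_succ_iff.mp (h1.trans_le (h _).2)
  · intro h x
    constructor
    · by_contra! hlt
      obtain ⟨i, hi⟩ : ∃ i : Fin n, i.val = Nat.count (· ∈ univ.image a) x :=
        ⟨⟨_, hlt.trans_le (le_b x)⟩, rfl⟩
      have h1 := (lt_count_image_iff hb i x).mp (hi ▸ hlt)
      have h2 := (lt_count_image_iff ha i.castSucc x).mpr ((h i).1.trans_lt h1)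
      exact h2.ne hi
    · by_contra! hlt
      obtain ⟨i, hi⟩ : ∃ i : Fin n, i.val = Nat.count (· ∈ univ.image b) x :=
        ⟨⟨_, Nat.succ_lt_succ_iff.mp (hlt.trans_le (le_a _))⟩, rfl⟩
      have h1 := (lt_count_image_iff ha i.succ (x + 1)).mp (by rwa [Fin.val_succ, hi])
      have h2 := (lt_count_image_iff hb i x).mpr ((h i).2.trans_le (Nat.lt_succ_iff.mp h1))
      exact h2.ne hi

theorem count_insert_zero_image_succ (C : Finset ℕ) (x : ℕ) :
    Nat.count (· ∈ insert 0 (C.image (· + 1))) (x + 1) = Nat.count (· ∈ C) x + 1 := by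
  induction x with
  | zero => simp [Nat.count_succ]
  | succ x ih => rw [Nat.count_succ, ih, Nat.count_succ]; simp [add_right_comm]

theorem interlaces_insert_zero_image_succ {A B : Finset ℕ} :
    Interlaces (insert 0 (B.image (· + 1))) A ↔ Interlaces A B := by
  simp only [Interlaces, count_insert_zero_image_succ]
  constructor
  · intro h x
    have h1 := (h x).2
    have h2 := (h (x + 1)).1
    rw [count_insert_zero_image_succ] at h2
    omega
  · intro h x
    refine ⟨?_, by have := (h x).1; omega⟩
    cases x with
    | zero => simp
    | succ x => rw [count_insert_zero_image_succ]; exact (h x).2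

section Transfer

variable {R : Type*} [CommRing R]

theorem sum_piFinset_det {n : ℕ} {β : Type*} (φ : Fin n → β → R) (I : Fin n → Finset β) :
    ∑ c ∈ Fintype.piFinset I, Matrix.det (Matrix.of fun i l ↦ φ i (c l))
      = Matrix.det (Matrix.of fun i l ↦ ∑ t ∈ I l, φ i t) := by
  have key := (Matrix.detRowAlternating (n := Fin n) (R := R)).toMultilinearMap.map_sum_finset
    (fun _ (t : β) i ↦ φ i t) I
  have rows : (fun l ↦ ∑ t ∈ I l, fun i ↦ φ i t)
      = (Matrix.of fun i l ↦ ∑ t ∈ I l, φ i t).transpose := by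
    ext l i
    simp
  rw [rows] at key
  rw [← Matrix.det_transpose]
  refine (key.trans (sum_congr rfl fun c _ ↦ ?_)).symm
  exact Matrix.det_transpose (Matrix.of fun i l ↦ φ i (c l))

/-- Subtracting from each column its predecessor turns the row of ones into `(1, 0, …, 0)`. -/
theorem det_cons_one {n : ℕ} (Ψ : Fin n → Fin (n + 1) → R) :
    Matrix.det (Matrix.of (Fin.cons (fun _ ↦ 1) Ψ : Fin (n + 1) → Fin (n + 1) → R))
      = Matrix.det (Matrix.of fun i l : Fin n ↦ Ψ i l.succ - Ψ i l.castSucc) := by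
  set A : Matrix (Fin (n + 1)) (Fin (n + 1)) R :=
    (Matrix.of (Fin.cons (fun _ ↦ 1) Ψ : Fin (n + 1) → Fin (n + 1) → R)).transpose with hA
  set A' : Matrix (Fin (n + 1)) (Fin (n + 1)) R := Matrix.of fun l i ↦
    (Fin.cases (A 0 i) (fun l' ↦ A l'.succ i - A l'.castSucc i) l : R) with hA'
  have det_eq : A.det = A'.det := by
    apply Matrix.det_eq_of_forall_row_eq_smul_add_pred (fun _ ↦ 1)
    · intro j
      simp [hA']
    · intro i j
      simp [hA']
  have minor : A'.submatrix (Fin.succAbove 0) Fin.succ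
      = (Matrix.of fun i l : Fin n ↦ Ψ i l.succ - Ψ i l.castSucc).transpose := by
    ext l i
    simp [hA', hA]
  have corner : A' 0 0 = 1 := by simp [hA', hA]
  have column (i : Fin n) : A' i.succ 0 = 0 := by simp [hA', hA]
  rw [← Matrix.det_transpose, ← hA, det_eq, Matrix.det_succ_column_zero, Fin.sum_univ_succ, minor,
    Matrix.det_transpose]
  simp [column, corner]

open scoped Classical in
theorem sum_piFinset_Ico_eq_sum_interlaces {φ : ℕ → ℕ → R} {n M : ℕ} {c : Fin (n + 1) → ℕ}
    (hc : StrictMono c) (hM : ∀ i, c i ≤ M) {q : Fin n → ℕ} (hq : StrictMono q) :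
    ∑ D ∈ (range M).powerset with
        Interlaces (univ.image c) D ∧ #(univ.image c) = #D + 1, altDet φ (univ.image q) D
      = ∑ d ∈ Fintype.piFinset fun l : Fin n ↦ Ico (c l.castSucc) (c l.succ),
          Matrix.det (Matrix.of fun i l ↦ φ (q i) (d l)) := by
  have mem_box {d : Fin n → ℕ} :
      d ∈ Fintype.piFinset (fun l : Fin n ↦ Ico (c l.castSucc) (c l.succ))
        ↔ ∀ l, c l.castSucc ≤ d l ∧ d l < c l.succ := by
    simp only [Fintype.mem_piFinset, mem_Ico]
  have strictMono_of_box {d : Fin n → ℕ}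
      (hd : ∀ l, c l.castSucc ≤ d l ∧ d l < c l.succ) : StrictMono d := fun i j hij ↦
    (hd i).2.trans_le ((hc.monotone (Fin.succ_le_castSucc_iff.mpr hij)).trans (hd j).1)
  symm
  refine sum_bij (fun d _ ↦ univ.image d) ?_ ?_ ?_ ?_
  · intro d hd
    have hd' := strictMono_of_box (mem_box.mp hd)
    refine mem_filter.mpr ⟨mem_powerset.mpr fun x hx ↦ ?_,
      (interlaces_image_iff hc hd').mpr (mem_box.mp hd), ?_⟩
    · obtain ⟨l, _, rfl⟩ := mem_image.mp hx
      exact mem_range.mpr ((mem_box.mp hd l).2.trans_le (hM _))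
    · rw [card_image_univ_of_strictMono hc, card_image_univ_of_strictMono hd']
  · intro d hd d' hd' h
    rw [← coe_inj, coe_image, coe_image, coe_univ, Set.image_univ, Set.image_univ] at h
    exact ((strictMono_of_box (mem_box.mp hd)).range_inj
      (strictMono_of_box (mem_box.mp hd'))).mp h
  · intro D hD
    obtain ⟨_, hD, hcard⟩ := mem_filter.mp hD
    rw [card_image_univ_of_strictMono hc] at hcard
    obtain ⟨d, hd, rfl⟩ := exists_strictMono_image_eq (Nat.succ_injective hcard).symm
    exact ⟨d, mem_box.mpr ((interlaces_image_iff hc hd).mp hD), rfl⟩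
  · intro d hd
    exact (altDet_image φ hq (strictMono_of_box (mem_box.mp hd))).symm

theorem altDet_insert_one {φ ψ : ℕ → ℕ → R} {n : ℕ} {q : Fin n → ℕ} {c : Fin (n + 1) → ℕ}
    (hq : StrictMono q) (hc : StrictMono c) (q_pos : ∀ i, 1 ≤ q i) (ψ_one : ∀ x, ψ 1 x = 1)
    (ψ_succ : ∀ i x, ψ (q i + 1) x = ∑ t ∈ range x, φ (q i) t) :
    altDet ψ (insert 1 ((univ.image q).image (· + 1))) (univ.image c)
      = Matrix.det (Matrix.of fun i l : Fin n ↦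
          ∑ t ∈ Ico (c l.castSucc) (c l.succ), φ (q i) t) := by
  have strictMono_rows : StrictMono (Fin.cons 1 (fun i ↦ q i + 1) : Fin (n + 1) → ℕ) :=
    Fin.strictMono_cons.mpr
      ⟨fun i ↦ Nat.lt_succ_of_le (q_pos i), fun _ _ h ↦ Nat.succ_lt_succ (hq h)⟩
  have image_rows : univ.image (Fin.cons 1 (fun i ↦ q i + 1) : Fin (n + 1) → ℕ)
      = insert 1 ((univ.image q).image (· + 1)) := by
    rw [image_cons, image_image]
    rfl
  have rows : (Matrix.of fun i l ↦ ψ ((Fin.cons 1 (fun i ↦ q i + 1) : Fin (n + 1) → ℕ) i) (c l))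
      = Matrix.of (Fin.cons (fun _ ↦ 1) (fun i l ↦ ∑ t ∈ range (c l), φ (q i) t)
        : Fin (n + 1) → Fin (n + 1) → R) := by
    ext i l
    cases i using Fin.cases with
    | zero => simp [ψ_one]
    | succ i => simp [ψ_succ]
  rw [← image_rows, altDet_image _ strictMono_rows hc, rows, det_cons_one]
  congr 1
  ext i l
  exact (sum_Ico_eq_sub _ (hc.monotone Fin.castSucc_lt_succ.le)).symm

open scoped Classical in
theorem sum_altDet_interlaces {φ ψ : ℕ → ℕ → R} {Q A : Finset ℕ} (hQ : ∀ q ∈ Q, 1 ≤ q) {M : ℕ}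
    (hA : A ⊆ range (M + 1)) (ψ_one : ∀ x, ψ 1 x = 1)
    (ψ_succ : ∀ q ∈ Q, ∀ x, ψ (q + 1) x = ∑ t ∈ range x, φ q t) :
    ∑ D ∈ (range M).powerset with Interlaces A D ∧ #A = #D + 1, altDet φ Q D
      = altDet ψ (insert 1 (Q.image (· + 1))) A := by
  by_cases hcard : #A = #Q + 1
  · obtain ⟨n, hn⟩ : ∃ n, #Q = n := ⟨_, rfl⟩
    obtain ⟨q, hq, rfl⟩ := exists_strictMono_image_eq hn
    obtain ⟨c, hc, rfl⟩ := exists_strictMono_image_eq (hcard.trans (congrArg (· + 1) hn))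
    have hM (i) : c i ≤ M :=
      Nat.lt_succ_iff.mp (mem_range.mp (hA (mem_image_of_mem c (mem_univ i))))
    rw [altDet_insert_one (φ := φ) hq hc (fun i ↦ hQ _ (mem_image_of_mem q (mem_univ i))) ψ_one
      fun i ↦ ψ_succ _ (mem_image_of_mem q (mem_univ i)), ← sum_piFinset_det]
    exact sum_piFinset_Ico_eq_sum_interlaces hc hM hq
  · have card_rows : #(insert 1 (Q.image (· + 1))) = #Q + 1 := by
      rw [card_insert_of_notMem, card_image_of_injective _ (add_left_injective 1)]
      intro h
      obtain ⟨q, hq, h⟩ := mem_image.mp h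
      have := hQ q hq
      omega
    rw [altDet_of_card_ne _ fun h ↦ hcard (h.symm.trans card_rows)]
    refine sum_eq_zero fun D hD ↦ altDet_of_card_ne _ fun h ↦ hcard ?_
    rw [(mem_filter.mp hD).2.2, h]

open scoped Classical in
theorem sum_altDet_interlaces_insert_zero (φ : ℕ → ℕ → R) {Q C : Finset ℕ} (hQ : ∀ q ∈ Q, 1 ≤ q)
    {M : ℕ} (hC : C ⊆ range (M + 1)) (h0 : 0 ∉ C) :
    ∑ D ∈ (range M).powerset with Interlaces (insert 0 C) D ∧ #C = #D, altDet φ Q D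
      = altDet (fun q x ↦ ∑ t ∈ range x, φ q t) Q C := by
  set ψ : ℕ → ℕ → R := fun p x ↦ if p = 1 then 1 else ∑ t ∈ range x, φ (p - 1) t
  have ψ_succ (q) (hq : q ∈ Q) (x) : ψ (q + 1) x = ∑ t ∈ range x, φ q t :=
    if_neg (by have := hQ q hq; omega)
  have key := sum_altDet_interlaces (A := insert 0 C) hQ
    (insert_subset (mem_range.mpr M.succ_pos) hC) (fun x ↦ if_pos rfl) ψ_succ
  simp only [card_insert_of_notMem h0, add_left_inj] at key
  have rows_gt : ∀ p ∈ Q.image (· + 1), 1 < p := by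
    simpa [Nat.succ_le_iff] using hQ
  rw [key, altDet_insert_insert ψ rows_gt
    (fun c hc ↦ Nat.pos_of_ne_zero fun h ↦ h0 (h ▸ hc)) ?_,
    show ψ 1 0 = 1 from if_pos rfl, one_mul]
  · conv_lhs => rw [← image_id (s := C)]
    rw [altDet_image_image _ (fun _ _ ↦ Nat.succ_lt_succ) strictMono_id]
    exact altDet_congr fun q hq x _ ↦ ψ_succ q hq x
  · simp only [mem_image]
    rintro _ ⟨q, hq, rfl⟩
    rw [ψ_succ q hq, range_zero, sum_empty]

end Transfer

/-! ### Counting chains of interlacing sets -/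

section Walks

variable {α : Type*} {step : ℕ → α → α → Prop} {x₀ : α} {n : ℕ} {y : α}

/-- `c` is a walk of `n` steps from `x₀`, the `i`-th step being allowed by `step i`. It is recorded
as a function on `ℕ` that is constant from `n` on. -/
structure IsWalk (step : ℕ → α → α → Prop) (x₀ : α) (n : ℕ) (c : ℕ → α) : Prop where
  start : c 0 = x₀
  step_of_lt : ∀ i < n, step i (c i) (c (i + 1))
  eq_of_le : ∀ i, n ≤ i → c i = c n

/-- The number of walks of `n` steps from `x₀` to `y`. -/
def numWalks (step : ℕ → α → α → Prop) (x₀ : α) (n : ℕ) (y : α) : ℕ :=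
  Nat.card {c // IsWalk step x₀ n c ∧ c n = y}

theorem IsWalk.truncate {c : ℕ → α} (hc : IsWalk step x₀ (n + 1) c) :
    IsWalk step x₀ n fun i ↦ c (min i n) where
  start := by simpa using hc.start
  step_of_lt i hi := by
    simpa [hi.le, Nat.succ_le_of_lt hi] using hc.step_of_lt i (hi.trans n.lt_succ_self)
  eq_of_le i hi := by simp [hi]

theorem IsWalk.extend {c : ℕ → α} (hc : IsWalk step x₀ n c) (hy : step n (c n) y) :
    IsWalk step x₀ (n + 1) fun i ↦ if i ≤ n then c i else y where
  start := by simpa using hc.start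
  step_of_lt i hi := by
    rcases (Nat.lt_succ_iff.mp hi).lt_or_eq with h | rfl
    · simpa [h.le, Nat.succ_le_of_lt h] using hc.step_of_lt i h
    · simpa using hy
  eq_of_le i hi := by simp [(Nat.lt_of_succ_le hi).not_ge]

/-- Remove the last step of a walk. -/
def walkSuccEquiv (step : ℕ → α → α → Prop) (x₀ : α) (n : ℕ) (y : α) :
    {c // IsWalk step x₀ (n + 1) c ∧ c (n + 1) = y}
      ≃ Σ x : {x // step n x y}, {c // IsWalk step x₀ n c ∧ c n = x} where
  toFun c := ⟨⟨c.1 n, by simpa only [c.2.2] using c.2.1.step_of_lt n n.lt_succ_self⟩,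
    fun i ↦ c.1 (min i n), c.2.1.truncate, congrArg c.1 (min_self n)⟩
  invFun p := ⟨fun i ↦ if i ≤ n then p.2.1 i else y,
    p.2.2.1.extend (by simpa only [p.2.2.2] using p.1.2), if_neg n.lt_succ_self.not_ge⟩
  left_inv c := by
    ext i
    by_cases hi : i ≤ n
    · simp [hi]
    · simp [hi, c.2.1.eq_of_le i (Nat.lt_of_not_ge hi), c.2.2]
  right_inv p := by
    obtain ⟨⟨x, hx⟩, c, hc, hcx⟩ := p
    obtain rfl : c n = x := hcx
    refine Sigma.subtype_ext (by simp) (funext fun i ↦ ?_)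
    rcases le_total i n with hi | hi
    · simp [hi]
    · simp [hi, hc.eq_of_le i hi]

theorem finite_walks (hfin : ∀ i y, Finite {x // step i x y}) (n : ℕ) (y : α) :
    Finite {c // IsWalk step x₀ n c ∧ c n = y} := by
  induction n generalizing y with
  | zero =>
    have : Subsingleton {c // IsWalk step x₀ 0 c ∧ c 0 = y} := ⟨fun c d ↦ Subtype.ext <| funext
      fun i ↦ by rw [c.2.1.eq_of_le i i.zero_le, d.2.1.eq_of_le i i.zero_le, c.2.2, d.2.2]⟩
    infer_instance
  | succ n ih =>
    have := hfin n y
    exact Finite.of_equiv _ (walkSuccEquiv step x₀ n y).symm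

theorem numWalks_zero_self : numWalks step x₀ 0 x₀ = 1 := by
  have : Unique {c // IsWalk step x₀ 0 c ∧ c 0 = x₀} :=
    { default := ⟨fun _ ↦ x₀, ⟨rfl, by simp, fun _ _ ↦ rfl⟩, rfl⟩
      uniq := fun c ↦ Subtype.ext <| funext fun i ↦ by
        rw [c.2.1.eq_of_le i i.zero_le, c.2.2] }
  exact Nat.card_unique

theorem numWalks_zero_of_ne (hy : y ≠ x₀) : numWalks step x₀ 0 y = 0 := by
  have : IsEmpty {c // IsWalk step x₀ 0 c ∧ c 0 = y} :=
    ⟨fun c ↦ hy (c.2.2.symm.trans c.2.1.start)⟩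
  exact Nat.card_of_isEmpty

theorem numWalks_succ (hfin : ∀ i y, Finite {x // step i x y}) {S : Finset α}
    (hS : ∀ x, x ∈ S ↔ step n x y) :
    numWalks step x₀ (n + 1) y = ∑ x ∈ S, numWalks step x₀ n x := by
  have := finite_walks (x₀ := x₀) hfin
  have : Fintype {x // step n x y} := @Fintype.ofFinite _ (hfin n y)
  rw [numWalks, Nat.card_congr (walkSuccEquiv step x₀ n y), Nat.card_sigma, sum_subtype S hS]
  rfl

theorem card_walks_eq_sum (hfin : ∀ i y, Finite {x // step i x y}) {S : Finset α}
    (hS : ∀ c, IsWalk step x₀ n c → c n ∈ S) :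
    Nat.card {c // IsWalk step x₀ n c} = ∑ y ∈ S, numWalks step x₀ n y := by
  let last (c : {c // IsWalk step x₀ n c}) : S := ⟨c.1 n, hS c.1 c.2⟩
  have fiber (y : S) : {c // last c = y} ≃ {c // IsWalk step x₀ n c ∧ c n = y} :=
    (Equiv.subtypeEquivRight fun c ↦ Subtype.ext_iff).trans
      (Equiv.subtypeSubtypeEquivSubtypeInter (IsWalk step x₀ n) fun c ↦ c n = y)
  have := finite_walks (x₀ := x₀) hfin
  rw [Nat.card_congr ((Equiv.sigmaFiberEquiv last).symm.trans (Equiv.sigmaCongrRight fiber)),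
    Nat.card_sigma, ← sum_coe_sort S]
  rfl

end Walks

section Chains

variable {b : ℕ} {K : Finset ℕ} {j : ℕ} {Q C C' : Finset ℕ}

/-- Among the sets `C`, `C'` of positions of the dominoes crossing the left and right borders of the
`m`-th vertical strip, the one occupying the lowest cell of the strip; a hole on the right border
occupies that cell as well. -/
def lowSet (K : Finset ℕ) (m : ℕ) (C C' : Finset ℕ) : Finset ℕ :=
  if Even m then C else if (m + 1) / 2 ∈ K then insert 0 C' else C'

/-- Among the sets `C`, `C'` of positions of the dominoes crossing the left and right borders of the
`m`-th vertical strip, the one not counted by `lowSet`. -/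
def highSet (m : ℕ) (C C' : Finset ℕ) : Finset ℕ := if Even m then C' else C

/-- The relation between the sets `C`, `C'` of positions of the dominoes crossing the left and right
borders of the `m`-th vertical strip of the upper half of the region with holes at `K`. -/
structure Step (b : ℕ) (K : Finset ℕ) (m : ℕ) (C C' : Finset ℕ) : Prop where
  left_subset : C ⊆ range (b + m / 2)
  right_subset : C' ⊆ range (b + (m + 1) / 2)
  zero_notMem : Odd m → (m + 1) / 2 ∈ K → 0 ∉ C'
  interlaces : Interlaces (lowSet K m C C') (highSet m C C')
  card_eq : #(lowSet K m C C') = #(highSet m C C') + m % 2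

theorem step_iff {m : ℕ} : Step b K m C C' ↔ C ⊆ range (b + m / 2) ∧ C' ⊆ range (b + (m + 1) / 2) ∧
    (Odd m → (m + 1) / 2 ∈ K → 0 ∉ C') ∧
    Interlaces (lowSet K m C C') (highSet m C C') ∧
    #(lowSet K m C C') = #(highSet m C C') + m % 2 :=
  ⟨fun ⟨h1, h2, h3, h4, h5⟩ ↦ ⟨h1, h2, h3, h4, h5⟩, fun ⟨h1, h2, h3, h4, h5⟩ ↦ ⟨h1, h2, h3, h4, h5⟩⟩

theorem finite_step (b : ℕ) (K : Finset ℕ) (m : ℕ) (C' : Finset ℕ) :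
    Finite {C // Step b K m C C'} :=
  ((range (b + m / 2)).powerset.finite_toSet.subset
    fun _ hC ↦ mem_powerset.mpr hC.left_subset).to_subtype

theorem step_even_iff (hC' : C' ⊆ range (b + j)) :
    Step b K (2 * j) C C' ↔ C ⊆ range (b + j) ∧ Interlaces C C' ∧ #C = #C' := by
  have h1 : 2 * j / 2 = j := by omega
  have h2 : (2 * j + 1) / 2 = j := by omega
  simp [step_iff, lowSet, highSet, h1, h2, hC']

theorem step_odd_iff_of_mem (hK : j + 1 ∈ K) (hC' : C' ⊆ range (b + (j + 1))) :
    Step b K (2 * j + 1) C C'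
      ↔ C ⊆ range (b + j) ∧ 0 ∉ C' ∧ Interlaces (insert 0 C') C ∧ #C' = #C := by
  have h1 : (2 * j + 1) / 2 = j := by omega
  have h2 : (2 * j + 1 + 1) / 2 = j + 1 := by omega
  have h3 : (2 * j + 1) % 2 = 1 := by omega
  simp +contextual [step_iff, lowSet, highSet, h1, h2, h3, hC', hK, card_insert_of_notMem]

theorem step_odd_iff_of_notMem (hK : j + 1 ∉ K) (hC' : C' ⊆ range (b + (j + 1))) :
    Step b K (2 * j + 1) C C' ↔ C ⊆ range (b + j) ∧ Interlaces C' C ∧ #C' = #C + 1 := by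
  have h1 : (2 * j + 1) / 2 = j := by omega
  have h2 : (2 * j + 1 + 1) / 2 = j + 1 := by omega
  have h3 : (2 * j + 1) % 2 = 1 := by omega
  simp [step_iff, lowSet, highSet, h1, h2, h3, hC', hK]

theorem evenChoose_one (x : ℕ) : evenChoose 1 x = 1 := by
  simp [evenChoose]

theorem sum_oddChoose_succ {q : ℕ} (hq : 1 ≤ q) (N : ℕ) :
    ∑ x ∈ range N, oddChoose q (x + 1) = evenChoose (q + 1) N := by
  obtain ⟨t, rfl⟩ := Nat.exists_eq_add_of_le' hq
  have h1 : 2 * (t + 1) - 1 = 2 * t + 1 := by omega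
  have h2 : 2 * (t + 1 + 1) - 2 = 2 * t + 2 := by omega
  induction N with
  | zero => simp [evenChoose, h2, Nat.choose_eq_zero_of_lt (show t + 1 < 2 * t + 2 by omega)]
  | succ N ih =>
    have h3 : N + 1 + (t + 1) - 1 = N + t + 1 := by omega
    have h4 : N + 1 + (t + 1 + 1) - 1 = N + t + 2 := by omega
    have h5 : N + (t + 1 + 1) - 1 = N + t + 1 := by omega
    rw [sum_range_succ, ih, oddChoose, evenChoose, evenChoose, h1, h2, h3, h4, h5,
      Nat.choose_succ_succ' (N + t + 1) (2 * t + 1), Nat.cast_add, add_comm]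

theorem numWalks_two_mul_succ (hQ : ∀ q ∈ Q, 1 ≤ q)
    (ih : ∀ C ⊆ range (b + j), (numWalks (Step b K) ∅ (2 * j) C : ℚ) = altDet evenChoose Q C)
    (hC : C ⊆ range (b + j)) :
    (numWalks (Step b K) ∅ (2 * j + 1) C : ℚ)
      = altDet (fun q x ↦ oddChoose q (x + 1)) Q C := by
  classical
  have hshift : C.image (· + 1) ⊆ range (b + j + 1) :=
    image_subset_iff.mpr fun x hx ↦ mem_range.mpr (Nat.succ_lt_succ (mem_range.mp (hC hx)))
  have key := sum_altDet_interlaces_insert_zero evenChoose hQ hshift (by simp)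
  simp only [interlaces_insert_zero_image_succ,
    card_image_of_injective _ (add_left_injective 1)] at key
  rw [numWalks_succ (finite_step b K)
    (S := {D ∈ (range (b + j)).powerset | Interlaces D C ∧ #C = #D})
    fun D ↦ by rw [step_even_iff hC, mem_filter, mem_powerset, @eq_comm _ #C], Nat.cast_sum,
    sum_congr rfl fun D hD ↦ ih D (mem_powerset.mp (mem_filter.mp hD).1), key, ← image_id (s := Q),
    altDet_image_image _ strictMono_id (fun _ _ ↦ Nat.succ_lt_succ), image_id]
  exact altDet_congr fun q hq x _ ↦ sum_evenChoose (hQ q hq) (x + 1)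

theorem numWalks_two_mul_add_two_of_mem (hK : j + 1 ∈ K) (hQ : ∀ q ∈ Q, 1 ≤ q)
    (ih : ∀ C ⊆ range (b + j), (numWalks (Step b K) ∅ (2 * j + 1) C : ℚ)
      = altDet (fun q x ↦ oddChoose q (x + 1)) Q C)
    (hC : C ⊆ range (b + (j + 1))) :
    (numWalks (Step b K) ∅ (2 * j + 1 + 1) C : ℚ) = altDet evenChoose (Q.image (· + 1)) C := by
  classical
  have rows : altDet evenChoose (Q.image (· + 1)) C
      = altDet (fun q x ↦ ∑ t ∈ range x, oddChoose q (t + 1)) Q C := by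
    conv_lhs => rw [← image_id (s := C)]
    rw [altDet_image_image _ (fun _ _ ↦ Nat.succ_lt_succ) strictMono_id]
    exact altDet_congr fun q hq x _ ↦ (sum_oddChoose_succ (hQ q hq) x).symm
  rw [rows]
  by_cases h0 : 0 ∈ C
  · rw [numWalks_succ (finite_step b K) (S := ∅)
      fun D ↦ by simp [step_odd_iff_of_mem hK hC, h0], sum_empty, Nat.cast_zero,
      altDet_of_column_eq_zero h0 fun q _ ↦ sum_range_zero _]
  · rw [← sum_altDet_interlaces_insert_zero _ hQ hC h0, numWalks_succ (finite_step b K)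
      (S := {D ∈ (range (b + j)).powerset | Interlaces (insert 0 C) D ∧ #C = #D})
      fun D ↦ by simp [step_odd_iff_of_mem hK hC, h0], Nat.cast_sum]
    exact sum_congr rfl fun D hD ↦ ih D (mem_powerset.mp (mem_filter.mp hD).1)

theorem numWalks_two_mul_add_two_of_notMem (hK : j + 1 ∉ K) (hQ : ∀ q ∈ Q, 1 ≤ q)
    (ih : ∀ C ⊆ range (b + j), (numWalks (Step b K) ∅ (2 * j + 1) C : ℚ)
      = altDet (fun q x ↦ oddChoose q (x + 1)) Q C)
    (hC : C ⊆ range (b + (j + 1))) :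
    (numWalks (Step b K) ∅ (2 * j + 1 + 1) C : ℚ)
      = altDet evenChoose (insert 1 (Q.image (· + 1))) C := by
  classical
  rw [← sum_altDet_interlaces hQ hC evenChoose_one
      fun q hq x ↦ (sum_oddChoose_succ (hQ q hq) x).symm,
    numWalks_succ (finite_step b K)
      (S := {D ∈ (range (b + j)).powerset | Interlaces C D ∧ #C = #D + 1})
      fun D ↦ by simp [step_odd_iff_of_notMem hK hC], Nat.cast_sum]
  exact sum_congr rfl fun D hD ↦ ih D (mem_powerset.mp (mem_filter.mp hD).1)

/-- The rows `{1, …, j} \ {j + 1 - k | k ∈ K}` of the minor counting chains of `2 * j` steps. -/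
def rowSet (K : Finset ℕ) (j : ℕ) : Finset ℕ := {x ∈ Icc 1 j | j + 1 - x ∉ K}

theorem one_le_of_mem_rowSet {q : ℕ} (hq : q ∈ rowSet K j) : 1 ≤ q :=
  (mem_Icc.mp (mem_filter.mp hq).1).1

theorem rowSet_succ : rowSet K (j + 1)
    = if j + 1 ∈ K then (rowSet K j).image (· + 1)
      else insert 1 ((rowSet K j).image (· + 1)) := by
  have mem_image_rowSet (x : ℕ) :
      x ∈ (rowSet K j).image (· + 1) ↔ 2 ≤ x ∧ x ≤ j + 1 ∧ j + 2 - x ∉ K := by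
    simp only [rowSet, mem_image, mem_filter, mem_Icc]
    constructor
    · rintro ⟨y, ⟨⟨h1, h2⟩, h3⟩, rfl⟩
      exact ⟨by omega, by omega, by rwa [show j + 2 - (y + 1) = j + 1 - y by omega]⟩
    · rintro ⟨h1, h2, h3⟩
      exact ⟨x - 1, ⟨by omega, by rwa [show j + 1 - (x - 1) = j + 2 - x by omega]⟩, by omega⟩
  ext x
  have mem_left : x ∈ rowSet K (j + 1) ↔ 1 ≤ x ∧ x ≤ j + 1 ∧ j + 2 - x ∉ K := by
    simp only [rowSet, mem_filter, mem_Icc, and_assoc]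
  rcases eq_or_ne x 1 with rfl | hx
  · split_ifs with h <;> simp [mem_image_rowSet, mem_left, h, -mem_image]
  · have : 2 ≤ x ↔ 1 ≤ x := by omega
    split_ifs with h <;> simp only [mem_image_rowSet, mem_left, mem_insert, hx, this, false_or]

theorem numWalks_two_mul (b : ℕ) (K : Finset ℕ) (j : ℕ) (hC : C ⊆ range (b + j)) :
    (numWalks (Step b K) ∅ (2 * j) C : ℚ) = altDet evenChoose (rowSet K j) C := by
  induction j generalizing C with
  | zero =>
    have rowSet_zero : rowSet K 0 = ∅ := by simp [rowSet]
    rw [rowSet_zero, mul_zero]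
    rcases C.eq_empty_or_nonempty with rfl | hne
    · rw [numWalks_zero_self, altDet_empty_empty, Nat.cast_one]
    · rw [numWalks_zero_of_ne hne.ne_empty, Nat.cast_zero, altDet_of_card_ne]
      exact card_empty.trans_ne hne.card_ne_zero.symm
  | succ j ih =>
    have hQ (q) (hq : q ∈ rowSet K j) : 1 ≤ q := one_le_of_mem_rowSet hq
    have odd_step (C) (hC : C ⊆ range (b + j)) :=
      numWalks_two_mul_succ hQ (fun C hC ↦ ih hC) hC
    rw [rowSet_succ, mul_add, mul_one]
    split_ifs with hK
    · exact numWalks_two_mul_add_two_of_mem hK hQ odd_step hC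
    · exact numWalks_two_mul_add_two_of_notMem hK hQ odd_step hC

theorem card_chains (a b : ℕ) (K : Finset ℕ) :
    (Nat.card {c // IsWalk (Step b K) ∅ (2 * a) c} : ℚ)
      = (∏ q ∈ rowSet K a, oddChoose q (a + b)) * pairProd rowFactor (rowSet K a) := by
  have last_mem (c) (hc : IsWalk (Step b K) ∅ (2 * a) c) :
      c (2 * a) ∈ (range (b + a)).powerset := by
    rw [mem_powerset]
    rcases Nat.eq_zero_or_pos a with rfl | ha
    · simp [hc.start]
    · have h := (hc.step_of_lt (2 * a - 1) (by omega)).right_subset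
      rwa [show 2 * a - 1 + 1 = 2 * a by omega, Nat.mul_div_cancel_left a two_pos] at h
  rw [card_walks_eq_sum (finite_step b K) last_mem, Nat.cast_sum,
    sum_congr rfl fun C hC ↦ numWalks_two_mul b K a (mem_powerset.mp hC),
    sum_altDet_evenChoose (fun _ ↦ one_le_of_mem_rowSet), add_comm a b]

end Chains

/-! ### Matchings of a strip -/

section Strips

/-- Exactly one of three propositions holds. -/
def ExactlyOne (p q r : Prop) : Prop :=
  (p ∧ ¬ q ∧ ¬ r) ∨ (¬ p ∧ q ∧ ¬ r) ∨ (¬ p ∧ ¬ q ∧ r)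

/-- A perfect matching of what remains of a path of cells `0, …, L - 1` after the cells in `U` have
been removed: `P i` says that cell `i - 1` is matched with cell `i`. -/
structure IsStripMatching (L : ℕ) (U P : ℕ → Prop) : Prop where
  not_zero : ¬ P 0
  exactlyOne : ∀ i < L, ExactlyOne (P i) (P (i + 1)) (U i)
  not_last : ¬ P L

variable {A B : Finset ℕ} {L : ℕ} {U P P' : ℕ → Prop}

theorem IsStripMatching.iff_of_le (hP : IsStripMatching L U P) (hP' : IsStripMatching L U P') :
    ∀ i ≤ L, P i ↔ P' i
  | 0, _ => iff_of_false hP.not_zero hP'.not_zero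
  | i + 1, hi => by
    have h1 := hP.exactlyOne i hi
    have h2 := hP'.exactlyOne i hi
    have ih := hP.iff_of_le hP' i (Nat.le_of_succ_le hi)
    unfold ExactlyOne at h1 h2
    tauto

/-- The cells `2 * x`, `x ∈ A`, and `2 * x + 1`, `x ∈ B`. -/
def interleave (A B : Finset ℕ) (i : ℕ) : Prop := if Even i then i / 2 ∈ A else i / 2 ∈ B

/-- The only candidate for a matching of a strip with the cells `interleave A B` removed. -/
def stripEdge (A B : Finset ℕ) (i : ℕ) : Prop :=
  Even i ↔ Nat.count (· ∈ A) ((i + 1) / 2) ≠ Nat.count (· ∈ B) (i / 2)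

theorem IsStripMatching.count_eq [DecidablePred P] (hP : IsStripMatching L (interleave A B) P) :
    ∀ i ≤ L, Nat.count (· ∈ A) ((i + 1) / 2)
      = Nat.count (· ∈ B) (i / 2) + if Even i ↔ P i then 1 else 0
  | 0, _ => by simp [hP.not_zero]
  | i + 1, hi => by
    have ih := hP.count_eq i (Nat.le_of_succ_le hi)
    have h := hP.exactlyOne i hi
    rcases i.even_or_odd' with ⟨j, rfl | rfl⟩
    · have h1 : (2 * j + 1) / 2 = j := by omega
      have h2 : (2 * j + 1 + 1) / 2 = j + 1 := by omega
      have h3 : 2 * j / 2 = j := by omega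
      simp only [ExactlyOne, interleave, even_two_mul, if_true, h1, h2, h3, true_iff,
        Nat.even_add_one, not_true, false_iff, Nat.count_succ] at ih h ⊢
      grind
    · have h1 : (2 * j + 1) / 2 = j := by omega
      have h2 : (2 * j + 1 + 1) / 2 = j + 1 := by omega
      have h3 : (2 * j + 1 + 1 + 1) / 2 = j + 1 := by omega
      simp only [ExactlyOne, interleave, even_two_mul, if_false, h1, h2, h3, true_iff,
        Nat.even_add_one, not_true, not_false_iff, false_iff, Nat.count_succ] at ih h ⊢
      grind

theorem IsStripMatching.interlaces (hP : IsStripMatching L (interleave A B) P)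
    (hA : A ⊆ range ((L + 1) / 2)) (hB : B ⊆ range (L / 2)) :
    Interlaces A B ∧ #A = #B + L % 2 := by
  classical
  have count_A (x) (hx : (L + 1) / 2 ≤ x) : Nat.count (· ∈ A) x = #A :=
    count_mem_eq_card (hA.trans (range_subset_range.mpr hx))
  have count_B (x) (hx : L / 2 ≤ x) : Nat.count (· ∈ B) x = #B :=
    count_mem_eq_card (hB.trans (range_subset_range.mpr hx))
  have card_eq : #A = #B + L % 2 := by
    have h := hP.count_eq L le_rfl
    rw [count_A _ le_rfl, count_B _ le_rfl] at h
    simp only [hP.not_last, iff_false, Nat.not_even_iff] at h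
    split_ifs at h <;> omega
  refine ⟨fun x ↦ ⟨?_, ?_⟩, card_eq⟩
  · rcases le_or_gt (2 * x) L with hx | hx
    · have h := hP.count_eq _ hx
      rw [show (2 * x + 1) / 2 = x by omega, show 2 * x / 2 = x by omega] at h
      omega
    · rw [count_A x (by omega), count_B x (by omega)]
      omega
  · rcases le_or_gt (2 * x + 1) L with hx | hx
    · have h := hP.count_eq _ hx
      rw [show (2 * x + 1 + 1) / 2 = x + 1 by omega, show (2 * x + 1) / 2 = x by omega] at h
      split_ifs at h <;> omega
    · rw [count_A (x + 1) (by omega), count_B x (by omega)]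
      omega

theorem Interlaces.isStripMatching (h : Interlaces A B) (hA : A ⊆ range ((L + 1) / 2))
    (hB : B ⊆ range (L / 2)) (hcard : #A = #B + L % 2) :
    IsStripMatching L (interleave A B) (stripEdge A B) where
  not_zero := by simp [stripEdge]
  exactlyOne i _ := by
    rcases i.even_or_odd' with ⟨j, rfl | rfl⟩
    · have h1 : (2 * j + 1) / 2 = j := by omega
      have h2 : (2 * j + 1 + 1) / 2 = j + 1 := by omega
      have h3 : 2 * j / 2 = j := by omega
      have hj := h j
      simp only [ExactlyOne, interleave, stripEdge, even_two_mul, if_true, h1, h2, h3, true_iff,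
        Nat.even_add_one, not_true, false_iff, Nat.count_succ] at hj ⊢
      grind
    · have h1 : (2 * j + 1) / 2 = j := by omega
      have h2 : (2 * j + 1 + 1) / 2 = j + 1 := by omega
      have h3 : (2 * j + 1 + 1 + 1) / 2 = j + 1 := by omega
      have hj := h j
      have hj' := h (j + 1)
      simp only [ExactlyOne, interleave, stripEdge, even_two_mul, if_false, h1, h2, h3,
        true_iff, Nat.even_add_one, not_true, not_false_iff, false_iff, Nat.count_succ] at hj hj' ⊢
      grind
  not_last := by
    rw [stripEdge, count_mem_eq_card hA, count_mem_eq_card hB, Nat.even_iff]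
    omega

end Strips

/-! ### Symmetric matchings of the brick wall -/

/-- A pair of adjacent cells of the brick wall. The brick wall has the cells `(m, v) : ℤ × ℤ`, which
stand for the unit triangles of the lattice: `(m, v)` is the triangle of the `m`-th vertical strip
at height `v / 2` above the horizontal symmetry axis. The domino `vert m v` is the pair
`(m, v)`, `(m, v + 1)`; the domino `horiz m n` is the pair `(m - 1, v)`, `(m, v)` with
`v = m + 2 * n + 1`, the two triangles that share an edge on the line between these strips. -/
inductive Domino
  | vert (m v : ℤ)
  | horiz (m n : ℤ)

namespace Domino

/-- The two cells of a domino. -/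
def cells : Domino → Set (ℤ × ℤ)
  | vert m v => {(m, v), (m, v + 1)}
  | horiz m n => {(m - 1, m + 2 * n + 1), (m, m + 2 * n + 1)}

/-- The reflection of a domino in the horizontal symmetry axis. -/
def flip : Domino → Domino
  | vert m v => vert m (-v - 1)
  | horiz m n => horiz m (-n - m - 1)

/-- The reflection of a domino in the left border of strip `2 * a`. -/
def mirror (a : ℕ) : Domino → Domino
  | vert m v => vert (4 * a - 1 - m) v
  | horiz m n => horiz (4 * a - m) (n + m - 2 * a)

/-- The horizontal domino containing the cell `(m, v)`. -/
def horizAt (m v : ℤ) : Domino :=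
  if Even (m + v) then horiz (m + 1) ((v - m) / 2 - 1) else horiz m ((v - m) / 2)

variable {a : ℕ} {m v : ℤ} {t : Domino}

theorem flip_flip (t : Domino) : t.flip.flip = t := by
  cases t <;> simp only [flip, vert.injEq, horiz.injEq, true_and] <;> omega

theorem mirror_mirror (a : ℕ) (t : Domino) : (t.mirror a).mirror a = t := by
  cases t
  · simp [mirror]
  · simp only [mirror, horiz.injEq]
    omega

theorem mem_cells_flip : (m, v) ∈ t.flip.cells ↔ (m, -v) ∈ t.cells := by
  cases t <;> simp only [flip, cells, Set.mem_insert_iff, Set.mem_singleton_iff, Prod.mk.injEq] <;>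
    omega

theorem mem_cells_mirror : (m, v) ∈ (t.mirror a).cells ↔ (4 * a - 1 - m, v) ∈ t.cells := by
  cases t <;>
    simp only [mirror, cells, Set.mem_insert_iff, Set.mem_singleton_iff, Prod.mk.injEq] <;> omega

theorem mem_cells_iff :
    (m, v) ∈ t.cells ↔ t = vert m (v - 1) ∨ t = vert m v ∨ t = horizAt m v := by
  unfold horizAt
  cases t <;> split_ifs with h <;>
    simp only [cells, Set.mem_insert_iff, Set.mem_singleton_iff, Prod.mk.injEq, vert.injEq,
      horiz.injEq] <;>
    grind

theorem existsUnique_mem_cells_iff {S : Set Domino} :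
    (∃! t, t ∈ S ∧ (m, v) ∈ t.cells)
      ↔ ExactlyOne (vert m (v - 1) ∈ S) (vert m v ∈ S) (horizAt m v ∈ S) := by
  have h1 : vert m (v - 1) ≠ vert m v := by simp
  have h2 (v') : vert m v' ≠ horizAt m v := by unfold horizAt; split_ifs <;> simp
  simp only [mem_cells_iff, ExactlyOne]
  constructor
  · rintro ⟨t, ⟨ht, h⟩, huniq⟩
    simp only [and_imp] at huniq
    grind
  · rintro (⟨h, h', h''⟩ | ⟨h', h, h''⟩ | ⟨h', h'', h⟩) <;> exact ⟨_, ⟨h, by simp⟩, by grind⟩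

/-- Every domino can be moved by the two reflections to one in the upper left quadrant. -/
theorem quadrant_induction (a : ℕ) {motive : Domino → Prop}
    (flip : ∀ t : Domino, motive t.flip → motive t)
    (mirror : ∀ t : Domino, motive (t.mirror a) → motive t)
    (vert : ∀ (m : ℤ) (v : ℕ), m < 2 * a → motive (vert m v))
    (axis : ∀ j : ℤ, j < a → motive (horiz (2 * j + 1) (-j - 1)))
    (horiz : ∀ (m : ℤ) (e : ℕ), m ≤ 2 * a → motive (horiz m (e - m / 2))) (t : Domino) :
    motive t := by
  have vert_left (m v : ℤ) (hm : m < 2 * a) : motive (.vert m v) := by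
    rcases le_or_gt 0 v with hv | hv
    · lift v to ℕ using hv
      exact vert m v hm
    · obtain ⟨v, rfl⟩ := Int.eq_negSucc_of_lt_zero hv
      refine flip _ ?_
      rw [Domino.flip, Int.negSucc_eq, neg_neg, add_sub_cancel_right]
      exact vert m v hm
  have horiz_above (m n : ℤ) (hm : m ≤ 2 * a) (hv : 0 < m + 2 * n + 1) : motive (.horiz m n) := by
    obtain ⟨e, he⟩ := Int.eq_ofNat_of_zero_le (show 0 ≤ n + m / 2 by omega)
    rw [show n = e - m / 2 by omega]
    exact horiz m e hm
  have horiz_left (m n : ℤ) (hm : m ≤ 2 * a) : motive (.horiz m n) := by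
    rcases lt_trichotomy (m + 2 * n + 1) 0 with hv | hv | hv
    · exact flip _ (horiz_above m (-n - m - 1) hm (by omega))
    · obtain ⟨rfl, hj⟩ : m = 2 * (-n - 1) + 1 ∧ -n - 1 < a := by omega
      simpa using axis (-n - 1) hj
    · exact horiz_above m n hm hv
  cases t with
  | vert m v =>
    exact (lt_or_ge m (2 * a)).elim (vert_left m v) fun hm ↦ mirror _ (vert_left _ _ (by omega))
  | horiz m n =>
    exact (le_or_gt m (2 * a)).elim (horiz_left m n) fun hm ↦ mirror _ (horiz_left _ _ (by omega))

end Domino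

open Domino

section SymmMatchings

variable {a b : ℕ} {K : Finset ℕ} {S S' : Set Domino} {c : ℕ → Finset ℕ} {m i e : ℕ}

/-- The distance, in strips, from the `m`-th strip to the nearer vertical side of the hexagon. -/
def depth (a : ℕ) (m : ℤ) : ℤ := min m (4 * a - 1 - m)

/-- The cells of the hexagon with a pair of holes for each `k ∈ K`. -/
def cellRegion (a b : ℕ) (K : Finset ℕ) : Set (ℤ × ℤ) :=
  {p | 0 ≤ depth a p.1 ∧ |p.2| ≤ 2 * b + depth a p.1 ∧
    ∀ k ∈ K, ¬ (depth a p.1 = 2 * k - 2 ∧ p.2 = 0) ∧ ¬ (depth a p.1 = 2 * k - 1 ∧ |p.2| ≤ 1)}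

/-- A perfect matching of the cells of the hexagon with holes that is invariant under both
reflections. -/
structure IsSymmMatching (a b : ℕ) (K : Finset ℕ) (S : Set Domino) : Prop where
  cells_subset : ∀ t ∈ S, t.cells ⊆ cellRegion a b K
  existsUnique : ∀ p ∈ cellRegion a b K, ∃! t, t ∈ S ∧ p ∈ t.cells
  flip_mem : ∀ t ∈ S, t.flip ∈ S
  mirror_mem : ∀ t ∈ S, t.mirror a ∈ S

/-- `c m` is the set of positions, numbered upwards from the axis, of the dominoes of `S` crossing
the left border of the `m`-th strip above the axis. -/
def Crossings (a : ℕ) (S : Set Domino) (c : ℕ → Finset ℕ) : Prop :=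
  ∀ m ≤ 2 * a, ∀ e : ℕ, horiz m (e - m / 2) ∈ S ↔ e ∈ c m

theorem lowSet_subset {C C' : Finset ℕ} (hC : C ⊆ range (b + m / 2))
    (hC' : C' ⊆ range (b + (m + 1) / 2)) : lowSet K m C C' ⊆ range ((2 * b + m + 1) / 2) := by
  rw [show (2 * b + m + 1) / 2 = b + (m + 1) / 2 by omega, lowSet]
  split_ifs with hm hK
  · exact hC.trans (range_subset_range.mpr (by omega))
  · rw [Nat.even_iff] at hm
    exact insert_subset (mem_range.mpr (by omega)) hC'
  · exact hC'

theorem highSet_subset {C C' : Finset ℕ} (hC : C ⊆ range (b + m / 2))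
    (hC' : C' ⊆ range (b + (m + 1) / 2)) : highSet m C C' ⊆ range ((2 * b + m) / 2) := by
  rw [show (2 * b + m) / 2 = b + m / 2 by omega, highSet]
  split_ifs with hm
  · rw [Nat.even_iff] at hm
    rwa [show (m + 1) / 2 = m / 2 by omega] at hC'
  · exact hC

theorem mem_cellRegion_flip {m v : ℤ} :
    (m, -v) ∈ cellRegion a b K ↔ (m, v) ∈ cellRegion a b K := by
  simp [cellRegion]

theorem mem_cellRegion_mirror {m v : ℤ} :
    (4 * a - 1 - m, v) ∈ cellRegion a b K ↔ (m, v) ∈ cellRegion a b K := by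
  have : depth a (4 * a - 1 - m) = depth a m := by unfold depth; omega
  simp [cellRegion, this]

theorem mem_cellRegion_succ (hm : m < 2 * a) :
    ((m : ℤ), (i : ℤ) + 1) ∈ cellRegion a b K
      ↔ i < 2 * b + m ∧ ¬ (i = 0 ∧ Odd m ∧ (m + 1) / 2 ∈ K) := by
  have depth_eq : depth a m = m := by unfold depth; omega
  have abs_eq : |(i : ℤ) + 1| = i + 1 := abs_of_nonneg (by omega)
  simp only [cellRegion, Set.mem_ofPred_eq, depth_eq, abs_eq, Nat.odd_iff]
  constructor
  · rintro ⟨-, h, hK⟩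
    refine ⟨by omega, ?_⟩
    rintro ⟨rfl, hm2, hmK⟩
    exact (hK _ hmK).2 (by omega)
  · rintro ⟨h, hK⟩
    refine ⟨by omega, by omega, fun k hk ↦ ⟨by omega, fun hh ↦ hK ⟨by omega, by omega, ?_⟩⟩⟩
    rwa [show (m + 1) / 2 = k by omega]

theorem horizAt_natCast (m i : ℕ) : horizAt m (i + 1)
    = if Even (m + i) then horiz m (i / 2 - m / 2)
      else horiz (m + 1) (i / 2 - (m + 1) / 2) := by
  have parity : Even ((m : ℤ) + (i + 1)) ↔ ¬ Even (m + i) := by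
    rw [← add_assoc, Int.even_add_one]
    norm_cast
  simp only [horizAt, parity, ite_not, Nat.even_iff]
  split_ifs <;> simp only [horiz.injEq, true_and] <;> omega

theorem Crossings.interleave_iff (hc : Crossings a S c) (K : Finset ℕ) (hm : m < 2 * a) (i : ℕ) :
    interleave (lowSet K m (c m) (c (m + 1))) (highSet m (c m) (c (m + 1))) i
      ↔ horizAt m (i + 1) ∈ S ∨ (i = 0 ∧ Odd m ∧ (m + 1) / 2 ∈ K) := by
  have left : horiz m (i / 2 - m / 2) ∈ S ↔ i / 2 ∈ c m := by simpa using hc m hm.le (i / 2)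
  have right : horiz (m + 1) (i / 2 - (m + 1) / 2) ∈ S ↔ i / 2 ∈ c (m + 1) := by
    simpa using hc (m + 1) hm (i / 2)
  by_cases hm2 : Even m <;> by_cases hi2 : Even i
  · simp [interleave, lowSet, horizAt_natCast, Nat.even_add, hm2, hi2, left]
  · simp [interleave, highSet, horizAt_natCast, Nat.even_add, hm2, hi2, right]
  · have hi0 : i / 2 = 0 ↔ i = 0 := by rw [Nat.even_iff] at hi2; omega
    have hodd : Odd m := Nat.not_even_iff_odd.mp hm2
    by_cases hK : (m + 1) / 2 ∈ K <;> simp [interleave, lowSet, horizAt_natCast, Nat.even_add, hm2,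
      hodd, hi2, right, hK, hi0, or_comm]
  · have : i ≠ 0 := by rintro rfl; exact hi2 (by simp)
    simp [interleave, highSet, horizAt_natCast, Nat.even_add, hm2, hi2, left, this]

namespace IsSymmMatching

theorem exactlyOne (hS : IsSymmMatching a b K S) {m v : ℤ} (h : (m, v) ∈ cellRegion a b K) :
    ExactlyOne (vert m (v - 1) ∈ S) (vert m v ∈ S) (horizAt m v ∈ S) :=
  existsUnique_mem_cells_iff.mp (hS.existsUnique _ h)

theorem vert_zero_notMem (hS : IsSymmMatching a b K S) (m : ℤ) : vert m 0 ∉ S := fun h ↦ by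
  have hflip : vert m (0 - 1) ∈ S := hS.flip_mem _ h
  have := hS.exactlyOne (hS.cells_subset _ h (Set.mem_insert _ _))
  unfold ExactlyOne at this
  tauto

theorem horizAt_zero_mem_iff (hS : IsSymmMatching a b K S) (m : ℤ) :
    horizAt m 0 ∈ S ↔ (m, 0) ∈ cellRegion a b K := by
  refine ⟨fun h ↦ hS.cells_subset _ h (mem_cells_iff.mpr (.inr (.inr rfl))), fun h ↦ ?_⟩
  have h1 := hS.vert_zero_notMem m
  have h2 : vert m (0 - 1) ∉ S := fun h ↦ h1 (hS.flip_mem _ h)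
  have := hS.exactlyOne h
  unfold ExactlyOne at this
  tauto

theorem isStripMatching (hS : IsSymmMatching a b K S) (hc : Crossings a S c) (hm : m < 2 * a) :
    IsStripMatching (2 * b + m) (interleave (lowSet K m (c m) (c (m + 1)))
      (highSet m (c m) (c (m + 1)))) fun i ↦ vert m i ∈ S where
  not_zero := hS.vert_zero_notMem m
  exactlyOne i hi := by
    rw [hc.interleave_iff K hm]
    have hcell := mem_cellRegion_succ (b := b) (K := K) (i := i) hm
    by_cases hhole : i = 0 ∧ Odd m ∧ (m + 1) / 2 ∈ K
    · have hcell' : ((m : ℤ), (i : ℤ) + 1) ∉ cellRegion a b K := fun h ↦ (hcell.mp h).2 hhole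
      refine .inr (.inr ⟨fun h ↦ hcell' ?_, fun h ↦ hcell' ?_, .inr hhole⟩)
      · exact hS.cells_subset _ h (mem_cells_iff.mpr (.inl (by simp)))
      · exact hS.cells_subset _ h (mem_cells_iff.mpr (.inr (.inl (by simp))))
    · simpa only [hhole, or_false, add_sub_cancel_right, Nat.cast_succ] using
        hS.exactlyOne (hcell.mpr ⟨hi, hhole⟩)
  not_last h := by
    have := hS.cells_subset _ h (Set.mem_insert_of_mem _ rfl)
    exact lt_irrefl _ ((mem_cellRegion_succ hm).mp this).1

theorem bound_of_horiz_mem (hS : IsSymmMatching a b K S) (hm : m ≤ 2 * a)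
    (h : horiz m (e - m / 2) ∈ S) :
    0 < m ∧ e < b + m / 2 ∧ (Even m → m / 2 ∈ K → e ≠ 0) := by
  have hcell := hS.cells_subset _ h (Set.mem_insert _ _)
  have hm0 : 0 < m := by
    have := hcell.1
    unfold depth at this
    dsimp only at this
    omega
  obtain ⟨j, rfl⟩ := Nat.exists_eq_succ_of_ne_zero hm0.ne'
  have hv : ((j + 1 : ℕ) : ℤ) + 2 * (e - (j + 1 : ℕ) / 2) + 1
      = (2 * e + (j + 1) % 2 : ℕ) + 1 := by omega
  rw [hv, Nat.cast_succ, add_sub_cancel_right, mem_cellRegion_succ (by omega)] at hcell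
  refine ⟨hm0, by omega, fun h2 hK he ↦ hcell.2 ⟨?_, ?_, hK⟩⟩
  · rw [Nat.even_iff] at h2
    omega
  · rwa [← Nat.not_even_iff_odd, ← Nat.even_add_one]

theorem isWalk_of_crossings (hS : IsSymmMatching a b K S) (hc : Crossings a S c)
    (hconst : ∀ m, 2 * a ≤ m → c m = c (2 * a)) : IsWalk (Step b K) ∅ (2 * a) c where
  start := eq_empty_of_forall_notMem fun e he ↦
    (hS.bound_of_horiz_mem (Nat.zero_le _) ((hc 0 (Nat.zero_le _) e).mpr he)).1.false
  step_of_lt m hm := by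
    have bound (m) (hm : m ≤ 2 * a) : c m ⊆ range (b + m / 2) := fun e he ↦
      mem_range.mpr (hS.bound_of_horiz_mem hm ((hc m hm e).mpr he)).2.1
    obtain ⟨h1, h2⟩ := (hS.isStripMatching hc hm).interlaces
      (lowSet_subset (bound m hm.le) (bound (m + 1) hm))
      (highSet_subset (bound m hm.le) (bound (m + 1) hm))
    refine ⟨bound m hm.le, bound (m + 1) hm, fun hm2 hK h0 ↦ ?_, h1, by omega⟩
    exact (hS.bound_of_horiz_mem hm ((hc _ hm 0).mpr h0)).2.2 hm2.add_one hK rfl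
  eq_of_le := hconst

end IsSymmMatching


theorem horizAt_zero (m : ℤ) : horizAt m 0 = horiz (2 * (m / 2) + 1) (-(m / 2) - 1) := by
  unfold horizAt
  simp only [Int.even_iff]
  split_ifs <;> simp only [horiz.injEq] <;> omega

theorem mem_cellRegion_zero (hm : m < 2 * a) :
    ((m : ℤ), (0 : ℤ)) ∈ cellRegion a b K ↔ m / 2 + 1 ∉ K := by
  have depth_eq : depth a m = m := by unfold depth; omega
  simp only [cellRegion, Set.mem_ofPred_eq, depth_eq, abs_zero, zero_le_one, and_true]
  constructor
  · rintro ⟨-, -, h⟩ hK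
    have := h _ hK
    omega
  · intro hK
    refine ⟨by omega, by omega, fun k hk ↦ ?_⟩
    have : k ≠ m / 2 + 1 := fun h ↦ hK (h ▸ hk)
    omega

open scoped Classical in
/-- The positions of the dominoes of `S` crossing the left border of the `m`-th strip above the
axis, extended to be constant from `m = 2 * a` on. -/
def crossings (a b : ℕ) (S : Set Domino) (m : ℕ) : Finset ℕ :=
  {e ∈ range (b + a) | horiz (min m (2 * a) : ℕ) (e - (min m (2 * a) : ℕ) / 2) ∈ S}

namespace IsSymmMatching

theorem crossings_crossings (hS : IsSymmMatching a b K S) :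
    Crossings a S (crossings a b S) := fun m hm e ↦ by
  simp only [crossings, mem_filter, mem_range, min_eq_left hm]
  refine ⟨fun h ↦ ⟨?_, h⟩, And.right⟩
  have := (hS.bound_of_horiz_mem hm h).2.1
  omega

theorem isWalk_crossings (hS : IsSymmMatching a b K S) :
    IsWalk (Step b K) ∅ (2 * a) (crossings a b S) :=
  hS.isWalk_of_crossings hS.crossings_crossings fun m hm ↦ by
    rw [crossings, crossings, min_eq_right hm, min_self]

theorem subset_of_crossings (hS : IsSymmMatching a b K S) (hS' : IsSymmMatching a b K S')
    (hc : Crossings a S c) (hc' : Crossings a S' c) : S ⊆ S' := fun t ↦ by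
  induction t using quadrant_induction a with
  | flip t ih => exact fun h ↦ t.flip_flip ▸ hS'.flip_mem _ (ih (hS.flip_mem t h))
  | mirror t ih => exact fun h ↦ t.mirror_mirror a ▸ hS'.mirror_mem _ (ih (hS.mirror_mem t h))
  | vert m v hm =>
    intro h
    have hcell := hS.cells_subset _ h (Set.mem_insert_of_mem _ rfl)
    have hm0 : 0 ≤ m := (le_min_iff.mp hcell.1).1
    lift m to ℕ using hm0
    rw [mem_cellRegion_succ (by omega)] at hcell
    exact ((hS.isStripMatching hc (by omega)).iff_of_le (hS'.isStripMatching hc' (by omega)) v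
      hcell.1.le).mp h
  | axis j _ =>
    have axis_eq : horiz (2 * j + 1) (-j - 1) = horizAt (2 * j) 0 := by
      rw [horizAt_zero, Int.mul_ediv_cancel_left j two_ne_zero]
    rw [axis_eq, hS.horizAt_zero_mem_iff, hS'.horizAt_zero_mem_iff]
    exact id
  | horiz m e hm =>
    intro h
    have hcell := hS.cells_subset _ h (Set.mem_insert _ _)
    have hm0 : 0 ≤ m - 1 := (le_min_iff.mp hcell.1).1
    lift m to ℕ using (by omega)
    exact (hc' m (by omega) e).mpr ((hc m (by omega) e).mp h)

end IsSymmMatching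

/-- The matching in which the positions of the dominoes crossing the left border of the `m`-th strip
above the axis are given by `c m` for `m ≤ 2 * a`. The first two cases fold the domino into the
upper left quadrant. -/
def ofChain (a b : ℕ) (K : Finset ℕ) (c : ℕ → Finset ℕ) : Set Domino
  | vert m v =>
    let d := (depth a m).toNat
    0 ≤ depth a m ∧ max v (-v - 1) < 2 * b + depth a m ∧
      stripEdge (lowSet K d (c d) (c (d + 1))) (highSet d (c d) (c (d + 1)))
        (max v (-v - 1)).toNat
  | horiz m n =>
    let d := min m (4 * a - m)
    let v := m + 2 * n + 1
    0 ≤ d ∧ if v = 0 then d.toNat / 2 + 1 ∉ K else (|v| - 1).toNat / 2 ∈ c d.toNat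

theorem vert_mem_ofChain (hm : m < 2 * a) : vert m i ∈ ofChain a b K c ↔
    i < 2 * b + m ∧ stripEdge (lowSet K m (c m) (c (m + 1))) (highSet m (c m) (c (m + 1))) i := by
  have h1 : depth a m = m := by unfold depth; omega
  have h2 : max (i : ℤ) (-i - 1) = i := by omega
  change 0 ≤ depth a m ∧ _ < _ + depth a m ∧ _ ↔ _
  simp only [h1, h2, Int.toNat_natCast, Nat.cast_nonneg, true_and]
  norm_cast

theorem axis_mem_ofChain {j : ℕ} (hj : j < a) :
    horiz (2 * j + 1) (-j - 1) ∈ ofChain a b K c ↔ j + 1 ∉ K := by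
  have h1 : min (2 * (j : ℤ) + 1) (4 * a - (2 * j + 1)) = (2 * j + 1 : ℕ) := by omega
  have h2 : (2 * (j : ℤ) + 1) + 2 * (-j - 1) + 1 = 0 := by ring
  have h3 : (2 * j + 1) / 2 = j := by omega
  change 0 ≤ min _ _ ∧ ite _ _ _ ↔ _
  rw [h1, if_pos h2, Int.toNat_natCast, h3]
  exact and_iff_right (Int.natCast_nonneg _)

theorem crossings_ofChain (a b : ℕ) (K : Finset ℕ) (c : ℕ → Finset ℕ) :
    Crossings a (ofChain a b K c) c := fun m hm e ↦ by
  have h1 : min (m : ℤ) (4 * a - m) = m := by omega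
  have h2 : (m : ℤ) + 2 * (e - m / 2) + 1 ≠ 0 := by omega
  have h3 : (|(m : ℤ) + 2 * (e - m / 2) + 1| - 1).toNat / 2 = e := by
    rw [abs_of_nonneg (by omega)]
    omega
  change 0 ≤ min _ _ ∧ ite _ _ _ ↔ _
  rw [h1, if_neg h2, Int.toNat_natCast, h3]
  simp

theorem flip_mem_ofChain {t : Domino} : t.flip ∈ ofChain a b K c ↔ t ∈ ofChain a b K c := by
  cases t with
  | vert m v =>
    have : max (-v - 1) (-(-v - 1) - 1) = max v (-v - 1) := by omega
    change _ ∧ max (-v - 1) (-(-v - 1) - 1) < _ ∧ _ ↔ _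
    rw [this]
    rfl
  | horiz m n =>
    have : m + 2 * (-n - m - 1) + 1 = -(m + 2 * n + 1) := by ring
    change _ ∧ ite (m + 2 * (-n - m - 1) + 1 = 0) _ ((|m + 2 * (-n - m - 1) + 1| - 1).toNat / 2 ∈ _)
      ↔ _
    rw [this, abs_neg]
    simp only [neg_eq_zero]
    rfl

theorem mirror_mem_ofChain {t : Domino} :
    t.mirror a ∈ ofChain a b K c ↔ t ∈ ofChain a b K c := by
  cases t with
  | vert m v =>
    have : depth a (4 * a - 1 - m) = depth a m := by unfold depth; omega
    change 0 ≤ depth a (4 * a - 1 - m) ∧ _ < _ + depth a (4 * a - 1 - m) ∧ stripEdge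
      (lowSet K (depth a (4 * a - 1 - m)).toNat _ _) (highSet (depth a (4 * a - 1 - m)).toNat _ _) _
      ↔ _
    rw [this]
    rfl
  | horiz m n =>
    have h1 : min (4 * a - m) (4 * a - (4 * a - m)) = min m (4 * a - m) := by omega
    have h2 : 4 * a - m + 2 * (n + m - 2 * a) + 1 = m + 2 * n + 1 := by ring
    change 0 ≤ min (4 * a - m) (4 * a - (4 * a - m)) ∧
      ite (4 * a - m + 2 * (n + m - 2 * a) + 1 = 0) _ _ ↔ _
    rw [h1, h2]
    rfl

theorem isStripMatching_ofChain (hc : IsWalk (Step b K) ∅ (2 * a) c) (hm : m < 2 * a) :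
    IsStripMatching (2 * b + m) (interleave (lowSet K m (c m) (c (m + 1)))
      (highSet m (c m) (c (m + 1)))) fun i ↦ vert m i ∈ ofChain a b K c := by
  have step := hc.step_of_lt m hm
  have strip := step.interlaces.isStripMatching
    (lowSet_subset step.left_subset step.right_subset)
    (highSet_subset step.left_subset step.right_subset) (by have := step.card_eq; omega)
  have vert_iff (i) (hi : i ≤ 2 * b + m) : vert m i ∈ ofChain a b K c
      ↔ stripEdge (lowSet K m (c m) (c (m + 1))) (highSet m (c m) (c (m + 1))) i := by
    rw [vert_mem_ofChain hm, and_iff_right_iff_imp]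
    refine fun h ↦ hi.lt_of_ne ?_
    rintro rfl
    exact strip.not_last h
  refine ⟨?_, fun i hi ↦ ?_, ?_⟩
  · exact (vert_iff 0 (Nat.zero_le _)).not.mpr strip.not_zero
  · rw [vert_iff i hi.le, vert_iff (i + 1) hi]
    exact strip.exactlyOne i hi
  · exact (vert_iff _ le_rfl).not.mpr strip.not_last

theorem cells_vert_subset (hc : IsWalk (Step b K) ∅ (2 * a) c) (hm : m < 2 * a)
    (h : vert m i ∈ ofChain a b K c) : (vert m i).cells ⊆ cellRegion a b K := by
  have strip := isStripMatching_ofChain hc hm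
  have hi := ((vert_mem_ofChain hm).mp h).1
  obtain ⟨j, rfl⟩ := Nat.exists_eq_succ_of_ne_zero
    (show i ≠ 0 by rintro rfl; exact strip.not_zero h)
  have notMem_hole : ¬ (j = 0 ∧ Odd m ∧ (m + 1) / 2 ∈ K) := fun hhole ↦ by
    have := strip.exactlyOne j (by omega)
    rw [(crossings_ofChain a b K c).interleave_iff K hm] at this
    unfold ExactlyOne at this
    tauto
  rintro p (rfl | rfl)
  · exact (mem_cellRegion_succ hm).mpr ⟨by omega, notMem_hole⟩
  · exact (mem_cellRegion_succ hm).mpr ⟨hi, fun hhole ↦ j.succ_ne_zero hhole.1⟩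

theorem cells_axis_subset (hm : m < a) (h : horiz (2 * m + 1) (-m - 1) ∈ ofChain a b K c) :
    (horiz (2 * m + 1) (-m - 1)).cells ⊆ cellRegion a b K := by
  rw [axis_mem_ofChain hm] at h
  have left : (((2 * m : ℕ) : ℤ), (0 : ℤ)) ∈ cellRegion a b K :=
    (mem_cellRegion_zero (by omega)).mpr (by rwa [show 2 * m / 2 = m by omega])
  have right : (((2 * m + 1 : ℕ) : ℤ), (0 : ℤ)) ∈ cellRegion a b K :=
    (mem_cellRegion_zero (by omega)).mpr (by rwa [show (2 * m + 1) / 2 = m by omega])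
  rintro p (rfl | rfl)
  · convert left using 2 <;> push_cast <;> ring
  · convert right using 2 <;> push_cast <;> ring

theorem cells_horiz_subset (hc : IsWalk (Step b K) ∅ (2 * a) c) (hm : m ≤ 2 * a)
    (h : e ∈ c m) : (horiz m (e - m / 2)).cells ⊆ cellRegion a b K := by
  obtain ⟨j, rfl⟩ := Nat.exists_eq_succ_of_ne_zero
    (show m ≠ 0 by rintro rfl; simp [hc.start] at h)
  have step := hc.step_of_lt j hm
  have he := mem_range.mp (step.right_subset h)
  have hv : ((j + 1 : ℕ) : ℤ) + 2 * (e - (j + 1 : ℕ) / 2) + 1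
      = (2 * e + (j + 1) % 2 : ℕ) + 1 := by omega
  have left : ((j : ℤ), ((2 * e + (j + 1) % 2 : ℕ) : ℤ) + 1) ∈ cellRegion a b K := by
    refine (mem_cellRegion_succ hm).mpr ⟨by omega, ?_⟩
    rintro ⟨h0, hj, hK⟩
    obtain rfl : e = 0 := by omega
    exact step.zero_notMem hj hK h
  have right : (((j + 1 : ℕ) : ℤ), ((2 * e + (j + 1) % 2 : ℕ) : ℤ) + 1) ∈ cellRegion a b K := by
    rcases hm.lt_or_eq with hm | hm
    · refine (mem_cellRegion_succ hm).mpr ⟨by omega, fun ⟨_, hj, _⟩ ↦ ?_⟩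
      rw [Nat.odd_iff] at hj
      omega
    · rw [← mem_cellRegion_mirror]
      convert left using 2
      omega
  rintro p (rfl | rfl)
  · rwa [hv, Nat.cast_succ, add_sub_cancel_right]
  · rwa [hv]

theorem cells_subset_of_mem_ofChain (hc : IsWalk (Step b K) ∅ (2 * a) c) (t : Domino) :
    t ∈ ofChain a b K c → t.cells ⊆ cellRegion a b K := by
  induction t using quadrant_induction a with
  | flip t ih =>
    rintro h ⟨m, v⟩ hp
    refine mem_cellRegion_flip.mp (ih (flip_mem_ofChain.mpr h) ?_)
    rwa [mem_cells_flip, neg_neg]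
  | mirror t ih =>
    rintro h ⟨m, v⟩ hp
    refine mem_cellRegion_mirror.mp (ih (mirror_mem_ofChain.mpr h) ?_)
    rwa [mem_cells_mirror, sub_sub_cancel]
  | vert m i hm =>
    intro h
    lift m to ℕ using (le_min_iff.mp h.1).1
    exact cells_vert_subset hc (by omega) h
  | axis j hj =>
    intro h
    have := (le_min_iff.mp h.1).1
    lift j to ℕ using (by omega)
    exact cells_axis_subset (by omega) h
  | horiz m e hm =>
    intro h
    lift m to ℕ using (le_min_iff.mp h.1).1
    exact cells_horiz_subset hc (by omega) ((crossings_ofChain a b K c m (by omega) e).mp h)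

theorem existsUnique_mem_cells_of_involutive {f : Domino → Domino} (hf : f.Involutive)
    (hS : ∀ t ∈ S, f t ∈ S) {p p' : ℤ × ℤ} (hcells : ∀ t, p' ∈ (f t).cells ↔ p ∈ t.cells)
    (h : ∃! t, t ∈ S ∧ p' ∈ t.cells) : ∃! t, t ∈ S ∧ p ∈ t.cells := by
  obtain ⟨t, ⟨ht, hp⟩, huniq⟩ := h
  refine ⟨f t, ⟨hS t ht, by rwa [← hcells, hf]⟩, fun t' ⟨ht', hp'⟩ ↦ ?_⟩
  rw [← huniq (f t') ⟨hS t' ht', (hcells t').mpr hp'⟩, hf]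

theorem existsUnique_ofChain_of_nonneg (hc : IsWalk (Step b K) ∅ (2 * a) c) (hm : m < 2 * a)
    (h : ((m : ℤ), (i : ℤ)) ∈ cellRegion a b K) :
    ∃! t, t ∈ ofChain a b K c ∧ ((m : ℤ), (i : ℤ)) ∈ t.cells := by
  have strip := isStripMatching_ofChain hc hm
  rw [existsUnique_mem_cells_iff]
  cases i with
  | zero =>
    have hvert : vert m 0 ∉ ofChain a b K c := strip.not_zero
    have hvert' : vert m (0 - 1) ∉ ofChain a b K c := flip_mem_ofChain.not.mp hvert
    have hhoriz : horizAt m 0 ∈ ofChain a b K c := by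
      rw [horizAt_zero]
      exact_mod_cast (axis_mem_ofChain (j := m / 2) (by omega)).mpr ((mem_cellRegion_zero hm).mp h)
    exact .inr (.inr ⟨hvert', hvert, hhoriz⟩)
  | succ i =>
    rw [Nat.cast_succ, mem_cellRegion_succ hm] at h
    have := strip.exactlyOne i h.1
    rw [(crossings_ofChain a b K c).interleave_iff K hm, or_iff_left h.2] at this
    simpa only [Nat.cast_succ, add_sub_cancel_right] using this

theorem isSymmMatching_ofChain (hc : IsWalk (Step b K) ∅ (2 * a) c) :
    IsSymmMatching a b K (ofChain a b K c) where
  cells_subset := cells_subset_of_mem_ofChain hc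
  flip_mem _ := flip_mem_ofChain.mpr
  mirror_mem _ := mirror_mem_ofChain.mpr
  existsUnique := by
    have above (m v : ℤ) (hm : m < 2 * a) (hv : 0 ≤ v) (h : (m, v) ∈ cellRegion a b K) :
        ∃! t, t ∈ ofChain a b K c ∧ (m, v) ∈ t.cells := by
      lift m to ℕ using (le_min_iff.mp h.1).1
      lift v to ℕ using hv
      exact existsUnique_ofChain_of_nonneg hc (by omega) h
    have left (m v : ℤ) (hm : m < 2 * a) (h : (m, v) ∈ cellRegion a b K) :
        ∃! t, t ∈ ofChain a b K c ∧ (m, v) ∈ t.cells := by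
      rcases le_total 0 v with hv | hv
      · exact above m v hm hv h
      · refine existsUnique_mem_cells_of_involutive flip_flip (fun _ ↦ flip_mem_ofChain.mpr)
          (fun t ↦ ?_) (above m (-v) hm (by omega) (mem_cellRegion_flip.mpr h))
        rw [mem_cells_flip, neg_neg]
    rintro ⟨m, v⟩ h
    rcases lt_or_ge m (2 * a) with hm | hm
    · exact left m v hm h
    · refine existsUnique_mem_cells_of_involutive (mirror_mirror a) (fun _ ↦ mirror_mem_ofChain.mpr)
        (fun t ↦ ?_) (left (4 * a - 1 - m) v (by omega) (mem_cellRegion_mirror.mpr h))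
      rw [mem_cells_mirror, sub_sub_cancel]

theorem card_isSymmMatching (a b : ℕ) (K : Finset ℕ) :
    Nat.card {S // IsSymmMatching a b K S} = Nat.card {c // IsWalk (Step b K) ∅ (2 * a) c} := by
  refine Nat.card_eq_of_bijective (fun S ↦ ⟨crossings a b S.1, S.2.isWalk_crossings⟩) ⟨?_, ?_⟩
  · rintro ⟨S, hS⟩ ⟨S', hS'⟩ h
    have crossings_eq : crossings a b S = crossings a b S' := congrArg Subtype.val h
    have hc : Crossings a S' (crossings a b S) := crossings_eq ▸ hS'.crossings_crossings
    exact Subtype.ext ((hS.subset_of_crossings hS' hS.crossings_crossings hc).antisymm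
      (hS'.subset_of_crossings hS hc hS.crossings_crossings))
  · rintro ⟨c, hc⟩
    have hS := isSymmMatching_ofChain hc
    have eq_of_le (m) (hm : m ≤ 2 * a) : crossings a b (ofChain a b K c) m = c m := by
      ext e
      rw [← hS.crossings_crossings m hm e, crossings_ofChain a b K c m hm e]
    refine ⟨⟨_, hS⟩, Subtype.ext (funext fun m ↦ ?_)⟩
    rcases le_total m (2 * a) with hm | hm
    · exact eq_of_le m hm
    · change crossings a b (ofChain a b K c) m = c m
      rw [hc.eq_of_le m hm, ← eq_of_le _ le_rfl]
      exact hS.isWalk_crossings.eq_of_le m hm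

end SymmMatchings

/-! ### Boxes and unit triangles in the plane -/

section Boxes

variable {b : ℕ} {I J K : Set ℝ} {x h : ℝ}

/-- The point of the `x`-th vertical lattice line at height `h` above the horizontal symmetry axis
of the hexagon. -/
def latticePt (b : ℕ) (x h : ℝ) : Pt := (x * (s3 / 2), b + h)

/-- The points with `x ∈ I`, `h - x / 2 ∈ J` and `h + x / 2 ∈ K` in the coordinates `x`, `h` of
`latticePt`. For intervals this is a (possibly degenerate) hexagon with sides on lattice lines. -/
def hexBox (b : ℕ) (I J K : Set ℝ) : Set Pt :=
  {p | 2 / s3 * p.1 ∈ I ∧ -(1 / s3) * p.1 + p.2 - b ∈ J ∧ 1 / s3 * p.1 + p.2 - b ∈ K}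

theorem s3_ne_zero : s3 ≠ 0 := by simp [s3]

theorem exists_latticePt (b : ℕ) (p : Pt) : ∃ x h, p = latticePt b x h :=
  ⟨2 / s3 * p.1, p.2 - b, by
    ext
    · have := s3_ne_zero
      simp only [latticePt]
      field_simp
    · simp [latticePt]⟩

theorem latticePt_mem_hexBox :
    latticePt b x h ∈ hexBox b I J K ↔ x ∈ I ∧ h - x / 2 ∈ J ∧ h + x / 2 ∈ K := by
  have hs := s3_ne_zero
  have h₁ : 2 / s3 * (x * (s3 / 2)) = x := by field_simp
  have h₂ : -(1 / s3) * (x * (s3 / 2)) + (b + h) - b = h - x / 2 := by field_simp; ring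
  have h₃ : 1 / s3 * (x * (s3 / 2)) + (b + h) - b = h + x / 2 := by field_simp; ring
  simp only [hexBox, latticePt, Set.mem_ofPred_eq, h₁, h₂, h₃]

theorem smul_latticePt_add {r t : ℝ} (hrt : r + t = 1) (x h x' h' : ℝ) :
    r • latticePt b x h + t • latticePt b x' h' =
      latticePt b (r * x + t * x') (r * h + t * h') := by
  ext <;> simp only [latticePt, Prod.fst_add, Prod.snd_add, Prod.smul_fst, Prod.smul_snd,
    smul_eq_mul]
  · ring
  · linear_combination (b : ℝ) * hrt

theorem convex_hexBox (hI : Convex ℝ I) (hJ : Convex ℝ J) (hK : Convex ℝ K) :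
    Convex ℝ (hexBox b I J K) := by
  intro p hp p' hp' r t hr ht hrt
  obtain ⟨x, h, rfl⟩ := exists_latticePt b p
  obtain ⟨x', h', rfl⟩ := exists_latticePt b p'
  rw [latticePt_mem_hexBox] at hp hp'
  rw [smul_latticePt_add hrt, latticePt_mem_hexBox]
  refine ⟨hI hp.1 hp'.1 hr ht hrt, ?_, ?_⟩
  · convert hJ hp.2.1 hp'.2.1 hr ht hrt using 1
    simp only [smul_eq_mul]
    ring
  · convert hK hp.2.2 hp'.2.2 hr ht hrt using 1
    simp only [smul_eq_mul]
    ring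

theorem isOpenMap_affine {c : ℝ} (hc : c ≠ 0) (d e : ℝ) :
    IsOpenMap fun p : ℝ × ℝ ↦ c * p.1 + d * p.2 + e := by
  let f : ℝ × ℝ →ₗ[ℝ] ℝ := c • LinearMap.fst ℝ ℝ ℝ + d • LinearMap.snd ℝ ℝ ℝ
  have hf : Function.Surjective f := fun y ↦ ⟨(y / c, 0), by simp [f, mul_div_cancel₀ _ hc]⟩
  exact (isOpenMap_add_right e).comp (f.isOpenMap_of_finiteDimensional hf)

theorem interior_hexBox (b : ℕ) (I J K : Set ℝ) :
    interior (hexBox b I J K) = hexBox b (interior I) (interior J) (interior K) := by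
  have preimage_interior {c : ℝ} (hc : c ≠ 0) (d e : ℝ) (I : Set ℝ) :
      interior {p : Pt | c * p.1 + d * p.2 + e ∈ I} = {p | c * p.1 + d * p.2 + e ∈ interior I} :=
    ((isOpenMap_affine hc d e).preimage_interior_eq_interior_preimage (by fun_prop) I).symm
  have hbox (I J K : Set ℝ) : hexBox b I J K = {p : Pt | 2 / s3 * p.1 + 0 * p.2 + 0 ∈ I} ∩
      ({p | -(1 / s3) * p.1 + 1 * p.2 + -b ∈ J} ∩ {p | 1 / s3 * p.1 + 1 * p.2 + -b ∈ K}) := by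
    ext p
    simp [hexBox, sub_eq_add_neg]
  have hs := s3_ne_zero
  rw [hbox, hbox, interior_inter, interior_inter, preimage_interior (by simpa using hs),
    preimage_interior (by simpa using hs), preimage_interior (by simpa using hs)]

theorem isClosed_hexBox (hI : IsClosed I) (hJ : IsClosed J) (hK : IsClosed K) :
    IsClosed (hexBox b I J K) :=
  (hI.preimage (by fun_prop)).inter ((hJ.preimage (by fun_prop)).inter (hK.preimage (by fun_prop)))

theorem hexBox_subset_of_convex {C : Set Pt} (hC : Convex ℝ C) {x₀ x₁ l₀ l₁ u₀ u₁ : ℝ}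
    (hl₀ : latticePt b x₀ (u₀ - x₀ / 2) ∈ C) (hl : latticePt b (u₀ - l₀) ((l₀ + u₀) / 2) ∈ C)
    (hl₁ : latticePt b x₁ (l₀ + x₁ / 2) ∈ C) (hu₀ : latticePt b x₀ (l₁ + x₀ / 2) ∈ C)
    (hu : latticePt b (u₁ - l₁) ((l₁ + u₁) / 2) ∈ C) (hu₁ : latticePt b x₁ (u₁ - x₁ / 2) ∈ C) :
    hexBox b (Set.Icc x₀ x₁) (Set.Icc l₀ l₁) (Set.Icc u₀ u₁) ⊆ C := by
  have segment {c d x y₀ y₁ y ρ : ℝ} (hc : latticePt b c y₀ ∈ C) (hd : latticePt b d y₁ ∈ C)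
      (hx : x ∈ Set.Icc c d) (hy₀ : y₀ = y + ρ * (c - x)) (hy₁ : y₁ = y + ρ * (d - x)) :
      latticePt b x y ∈ C := by
    obtain ⟨r, t, hr, ht, hrt, rfl⟩ := (segment_eq_Icc (hx.1.trans hx.2)).superset hx
    convert hC hc hd hr ht hrt using 1
    rw [smul_latticePt_add hrt, hy₀, hy₁]
    congr 1
    simp only [smul_eq_mul]
    linear_combination (-y + ρ * (r * c + t * d)) * hrt
  intro p hp
  obtain ⟨x, h, rfl⟩ := exists_latticePt b p
  obtain ⟨hx, hlx, hux⟩ := latticePt_mem_hexBox.mp hp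
  have hlower : ∃ y ≤ h, latticePt b x y ∈ C := by
    rcases le_total x (u₀ - l₀) with hxm | hxm
    · exact ⟨u₀ - x / 2, by linarith [hux.1],
        segment hl₀ hl ⟨hx.1, hxm⟩ (ρ := -1 / 2) (by ring) (by ring)⟩
    · exact ⟨l₀ + x / 2, by linarith [hlx.1],
        segment hl hl₁ ⟨hxm, hx.2⟩ (ρ := 1 / 2) (by ring) (by ring)⟩
  have hupper : ∃ y ≥ h, latticePt b x y ∈ C := by
    rcases le_total x (u₁ - l₁) with hxm | hxm
    · exact ⟨l₁ + x / 2, by linarith [hlx.2],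
        segment hu₀ hu ⟨hx.1, hxm⟩ (ρ := 1 / 2) (by ring) (by ring)⟩
    · exact ⟨u₁ - x / 2, by linarith [hux.2],
        segment hu hu₁ ⟨hxm, hx.2⟩ (ρ := -1 / 2) (by ring) (by ring)⟩
  obtain ⟨y, hyh, hy⟩ := hlower
  obtain ⟨y', hhy', hy'⟩ := hupper
  obtain ⟨r, t, hr, ht, hrt, rfl⟩ := (segment_eq_Icc (hyh.trans hhy')).superset ⟨hyh, hhy'⟩
  convert hC hy hy' hr ht hrt using 1
  rw [smul_latticePt_add hrt, ← add_mul, hrt, one_mul]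
  rfl

end Boxes

section Triangles

variable {b : ℕ} {q q' : ℤ × ℤ} {p : Pt} {x h : ℝ} {Q Q' : Set (ℤ × ℤ)}

/-- The integer part of `h - x / 2` on the triangle of a cell. -/
def lower (q : ℤ × ℤ) : ℤ := (q.2 - 1 - q.1) / 2

/-- The integer part of `h + x / 2` on the triangle of a cell. -/
def upper (q : ℤ × ℤ) : ℤ := q.2 - 1 - lower q

/-- The closed unit triangle of the lattice that the cell `q` of the brick wall stands for. -/
def triangle (b : ℕ) (q : ℤ × ℤ) : Set Pt :=
  hexBox b (Set.Icc q.1 (q.1 + 1)) (Set.Icc (lower q) (lower q + 1))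
    (Set.Icc (upper q) (upper q + 1))

theorem latticePt_mem_triangle : latticePt b x h ∈ triangle b q ↔
    x ∈ Set.Icc (q.1 : ℝ) (q.1 + 1) ∧ h - x / 2 ∈ Set.Icc (lower q : ℝ) (lower q + 1) ∧
      h + x / 2 ∈ Set.Icc (upper q : ℝ) (upper q + 1) :=
  latticePt_mem_hexBox

theorem latticePt_mem_interior_triangle : latticePt b x h ∈ interior (triangle b q) ↔
    x ∈ Set.Ioo (q.1 : ℝ) (q.1 + 1) ∧ h - x / 2 ∈ Set.Ioo (lower q : ℝ) (lower q + 1) ∧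
      h + x / 2 ∈ Set.Ioo (upper q : ℝ) (upper q + 1) := by
  simp only [triangle, interior_hexBox, interior_Icc, latticePt_mem_hexBox]

theorem exists_mem_triangle (b : ℕ) (x h : ℝ) : ∃ q : ℤ × ℤ,
    (q.1 = ⌊x⌋ ∧ lower q = ⌊h - x / 2⌋ ∧ upper q = ⌊h + x / 2⌋) ∧
      latticePt b x h ∈ triangle b q := by
  have floor_mem (y : ℝ) : y ∈ Set.Icc (⌊y⌋ : ℝ) (⌊y⌋ + 1) :=
    ⟨Int.floor_le y, (Int.lt_floor_add_one y).le⟩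
  have hle := Int.le_floor_add (h - x / 2) x
  have hge := Int.le_floor_add_floor (h - x / 2) x
  rw [show h - x / 2 + x = h + x / 2 by ring] at hle hge
  have hlower : lower (⌊x⌋, ⌊h - x / 2⌋ + ⌊h + x / 2⌋ + 1) = ⌊h - x / 2⌋ := by
    simp only [lower]
    omega
  have hupper : upper (⌊x⌋, ⌊h - x / 2⌋ + ⌊h + x / 2⌋ + 1) = ⌊h + x / 2⌋ := by
    simp only [upper, hlower]
    omega
  refine ⟨_, ⟨rfl, hlower, hupper⟩, ?_⟩
  rw [latticePt_mem_triangle, hlower, hupper]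
  exact ⟨floor_mem _, floor_mem _, floor_mem _⟩

theorem isClosed_triangle (b : ℕ) (q : ℤ × ℤ) : IsClosed (triangle b q) :=
  isClosed_hexBox isClosed_Icc isClosed_Icc isClosed_Icc

theorem interior_triangle_nonempty (b : ℕ) (q : ℤ × ℤ) : (interior (triangle b q)).Nonempty := by
  rcases (by unfold upper lower; omega : upper q = lower q + q.1 ∨ upper q = lower q + q.1 + 1)
    with hq | hq
  · refine ⟨latticePt b (q.1 + 1 / 3) (lower q + q.1 / 2 + 1 / 2), ?_⟩
    simp only [latticePt_mem_interior_triangle, Set.mem_Ioo, hq]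
    push_cast
    refine ⟨⟨?_, ?_⟩, ⟨?_, ?_⟩, ?_, ?_⟩ <;> linarith
  · refine ⟨latticePt b (q.1 + 2 / 3) (lower q + q.1 / 2 + 1), ?_⟩
    simp only [latticePt_mem_interior_triangle, Set.mem_Ioo, hq]
    push_cast
    refine ⟨⟨?_, ?_⟩, ⟨?_, ?_⟩, ?_, ?_⟩ <;> linarith

theorem exists_mem_interior_triangle {U : Set Pt} (hU : IsOpen U) (hp : p ∈ U)
    (hq : p ∈ triangle b q) : (U ∩ interior (triangle b q)).Nonempty := by
  have hconv : Convex ℝ (triangle b q) :=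
    convex_hexBox (convex_Icc _ _) (convex_Icc _ _) (convex_Icc _ _)
  have hclosure :=
    hconv.closure_interior_eq_closure_of_nonempty_interior (interior_triangle_nonempty b q)
  exact mem_closure_iff.mp (hclosure ▸ subset_closure hq) U hU hp

theorem eq_of_mem_interior_triangle (hp : p ∈ interior (triangle b q))
    (hp' : p ∈ triangle b q') : q = q' := by
  have int_eq {m n : ℤ} {y : ℝ} (hm : y ∈ Set.Ioo (m : ℝ) (m + 1))
      (hn : y ∈ Set.Icc (n : ℝ) (n + 1)) : m = n := by
    have h₁ : (m : ℝ) < n + 1 := hm.1.trans_le hn.2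
    have h₂ : (n : ℝ) < m + 1 := hn.1.trans_lt hm.2
    norm_cast at h₁ h₂
    omega
  obtain ⟨x, h, rfl⟩ := exists_latticePt b p
  rw [latticePt_mem_interior_triangle] at hp
  rw [latticePt_mem_triangle] at hp'
  have hupper := int_eq hp.2.2 hp'.2.2
  rw [upper, upper, int_eq hp.2.1 hp'.2.1] at hupper
  exact Prod.ext (int_eq hp.1 hp'.1) (by omega)

/-- The region of the plane covered by the triangles of a set of cells. -/
def cellUnion (b : ℕ) (Q : Set (ℤ × ℤ)) : Set Pt := ⋃ q ∈ Q, triangle b q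

theorem mem_cellUnion : p ∈ cellUnion b Q ↔ ∃ q ∈ Q, p ∈ triangle b q := by
  simp only [cellUnion, Set.mem_iUnion, exists_prop]

theorem triangle_subset_cellUnion (hq : q ∈ Q) : triangle b q ⊆ cellUnion b Q :=
  fun _ hp ↦ mem_cellUnion.mpr ⟨q, hq, hp⟩

theorem mem_cellUnion_of_mem_interior_triangle (hp : p ∈ interior (triangle b q)) :
    p ∈ cellUnion b Q ↔ q ∈ Q := by
  refine ⟨fun h ↦ ?_, fun hq ↦ triangle_subset_cellUnion hq (interior_subset hp)⟩
  obtain ⟨q', hq', hp'⟩ := mem_cellUnion.mp h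
  rwa [eq_of_mem_interior_triangle hp hp']

theorem cellUnion_subset_cellUnion : cellUnion b Q ⊆ cellUnion b Q' ↔ Q ⊆ Q' := by
  refine ⟨fun h q hq ↦ ?_, fun h ↦ Set.biUnion_subset_biUnion_left h⟩
  obtain ⟨p, hp⟩ := interior_triangle_nonempty b q
  exact (mem_cellUnion_of_mem_interior_triangle hp).mp
    (h (triangle_subset_cellUnion hq (interior_subset hp)))

theorem cellUnion_injective (b : ℕ) : Function.Injective (cellUnion b) := fun _ _ h ↦
  (cellUnion_subset_cellUnion.mp h.subset).antisymm (cellUnion_subset_cellUnion.mp h.superset)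

theorem cellUnion_iUnion {ι : Type*} (Q : ι → Set (ℤ × ℤ)) (S : Set ι) :
    cellUnion b (⋃ i ∈ S, Q i) = ⋃ i ∈ S, cellUnion b (Q i) := by
  simp only [cellUnion, Set.biUnion_iUnion]

theorem isClosed_cellUnion (hQ : Q.Finite) : IsClosed (cellUnion b Q) :=
  hQ.isClosed_biUnion fun q _ ↦ isClosed_triangle b q

theorem disjoint_interior_cellUnion :
    interior (cellUnion b Q) ∩ interior (cellUnion b Q') = ∅ ↔ Disjoint Q Q' := by
  rw [← interior_inter, Set.disjoint_left]
  constructor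
  · intro h q hq hq'
    obtain ⟨p, hp⟩ := interior_triangle_nonempty b q
    have hsub : triangle b q ⊆ cellUnion b Q ∩ cellUnion b Q' :=
      Set.subset_inter (triangle_subset_cellUnion hq) (triangle_subset_cellUnion hq')
    exact Set.notMem_empty p (h ▸ interior_mono hsub hp)
  · refine fun h ↦ Set.eq_empty_iff_forall_notMem.mpr fun p hp ↦ ?_
    obtain ⟨q, hq, hpq⟩ := mem_cellUnion.mp (interior_subset hp).1
    obtain ⟨p', hp', hq'⟩ := exists_mem_interior_triangle isOpen_interior hp hpq
    exact h hq ((mem_cellUnion_of_mem_interior_triangle hq').mp (interior_subset hp').2)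

/-- A point of `Q` in none of the triangles that remain lies in exactly one hole `Q' i`, and then it
is an interior point of this hole. -/
theorem cellUnion_sdiff_iUnion_interior {ι : Type*} [Finite ι] {Q' : ι → Set (ℤ × ℤ)}
    (hQ : Q.Finite) (hsub : ∀ i, cellUnion b (Q' i) ⊆ interior (cellUnion b Q))
    (hpair : ∀ i j, i ≠ j →
      cellUnion b (Q' i) ∩ cellUnion b (Q' j) ⊆ cellUnion b (Q \ ⋃ i, Q' i)) :
    cellUnion b Q \ ⋃ i, interior (cellUnion b (Q' i)) = cellUnion b (Q \ ⋃ i, Q' i) := by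
  have hfin (i : ι) : (Q' i).Finite :=
    hQ.subset (cellUnion_subset_cellUnion.mp ((hsub i).trans interior_subset))
  have mem_hole {p : Pt} (hp : p ∈ cellUnion b Q) (hdiff : p ∉ cellUnion b (Q \ ⋃ i, Q' i)) :
      ∃ i, p ∈ cellUnion b (Q' i) := by
    obtain ⟨q, hq, hpq⟩ := mem_cellUnion.mp hp
    by_contra! hp'
    refine hdiff (mem_cellUnion.mpr ⟨q, ⟨hq, fun hq' ↦ ?_⟩, hpq⟩)
    obtain ⟨i, hi⟩ := Set.mem_iUnion.mp hq'
    exact hp' i (triangle_subset_cellUnion hi hpq)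
  refine Set.Subset.antisymm (fun p ⟨hp, hp'⟩ ↦ ?_) fun p hp ↦ ?_
  · by_contra hdiff
    obtain ⟨i, hi⟩ := mem_hole hp hdiff
    let U := (interior (cellUnion b Q) ∩ (cellUnion b (Q \ ⋃ i, Q' i))ᶜ) ∩
      ⋂ j : {j // j ≠ i}, (cellUnion b (Q' j))ᶜ
    have hU : IsOpen U :=
      (isOpen_interior.inter (isClosed_cellUnion hQ.sdiff).isOpen_compl).inter
        (isOpen_iInter_of_finite fun j ↦ (isClosed_cellUnion (hfin j)).isOpen_compl)
    refine hp' (Set.mem_iUnion.mpr ⟨i, mem_interior.mpr ⟨U, fun p' hp' ↦ ?_, hU, ?_⟩⟩)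
    · obtain ⟨j, hj⟩ := mem_hole (interior_subset hp'.1.1) hp'.1.2
      by_cases hji : j = i
      · rwa [← hji]
      · exact absurd hj (Set.mem_iInter.mp hp'.2 ⟨j, hji⟩)
    · exact ⟨⟨hsub i hi, hdiff⟩,
        Set.mem_iInter.mpr fun j hj ↦ hdiff (hpair i j j.2.symm ⟨hi, hj⟩)⟩
  · obtain ⟨q, hq, hpq⟩ := mem_cellUnion.mp hp
    refine ⟨triangle_subset_cellUnion hq.1 hpq, fun hp' ↦ hq.2 ?_⟩
    obtain ⟨i, hi⟩ := Set.mem_iUnion.mp hp'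
    obtain ⟨p', hp', hq'⟩ := exists_mem_interior_triangle isOpen_interior hi hpq
    exact Set.mem_iUnion.mpr
      ⟨i, (mem_cellUnion_of_mem_interior_triangle hq').mp (interior_subset hp')⟩

/-- The cells of the triangles in the hexagonal box with the given sides. -/
def boxCells (x₀ x₁ l₀ l₁ u₀ u₁ : ℤ) : Set (ℤ × ℤ) :=
  {q | q.1 ∈ Set.Ico x₀ x₁ ∧ lower q ∈ Set.Ico l₀ l₁ ∧ upper q ∈ Set.Ico u₀ u₁}

theorem finite_boxCells (x₀ x₁ l₀ l₁ u₀ u₁ : ℤ) : (boxCells x₀ x₁ l₀ l₁ u₀ u₁).Finite := by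
  refine (Set.finite_Icc (x₀, l₀ + u₀) (x₁, l₁ + u₁)).subset fun q ⟨⟨_, _⟩, ⟨_, _⟩, _, _⟩ ↦ ?_
  rw [Set.mem_Icc, Prod.le_def, Prod.le_def]
  grind [upper]

theorem triangle_subset_hexBox {x₀ x₁ l₀ l₁ u₀ u₁ : ℤ}
    (hq : q ∈ boxCells x₀ x₁ l₀ l₁ u₀ u₁) :
    triangle b q ⊆ hexBox b (Set.Icc x₀ x₁) (Set.Icc l₀ l₁) (Set.Icc u₀ u₁) := by
  have Icc_subset {n c d : ℤ} (hn : n ∈ Set.Ico c d) :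
      Set.Icc (n : ℝ) (n + 1) ⊆ Set.Icc (c : ℝ) d :=
    Set.Icc_subset_Icc (mod_cast hn.1) (mod_cast hn.2)
  exact fun _ ⟨hx, hl, hu⟩ ↦ ⟨Icc_subset hq.1 hx, Icc_subset hq.2.1 hl, Icc_subset hq.2.2 hu⟩

/-- A point of the interior lies in the triangle found by rounding its coordinates down, and the
interior is dense. -/
theorem hexBox_eq_cellUnion {x₀ x₁ l₀ l₁ u₀ u₁ : ℤ}
    (hne : (boxCells x₀ x₁ l₀ l₁ u₀ u₁).Nonempty) :
    hexBox b (Set.Icc x₀ x₁) (Set.Icc l₀ l₁) (Set.Icc u₀ u₁) =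
      cellUnion b (boxCells x₀ x₁ l₀ l₁ u₀ u₁) := by
  refine Set.Subset.antisymm ?_ (Set.iUnion₂_subset fun _ ↦ triangle_subset_hexBox)
  have hinterior_ne :
      (interior (hexBox b (Set.Icc x₀ x₁) (Set.Icc l₀ l₁) (Set.Icc u₀ u₁))).Nonempty :=
    hne.elim fun q hq ↦
      (interior_triangle_nonempty b q).mono (interior_mono (triangle_subset_hexBox hq))
  have hconv : Convex ℝ (hexBox b (Set.Icc x₀ x₁) (Set.Icc l₀ l₁) (Set.Icc u₀ u₁)) :=
    convex_hexBox (convex_Icc _ _) (convex_Icc _ _) (convex_Icc _ _)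
  have hclosure := hconv.closure_interior_eq_closure_of_nonempty_interior hinterior_ne
  refine subset_closure.trans (hclosure ▸ closure_minimal (fun p hp ↦ ?_)
    (isClosed_cellUnion (finite_boxCells ..)))
  obtain ⟨x, h, rfl⟩ := exists_latticePt b p
  simp only [interior_hexBox, interior_Icc, latticePt_mem_hexBox] at hp
  obtain ⟨q, ⟨hqx, hql, hqu⟩, hpq⟩ := exists_mem_triangle b x h
  have floor_mem {y : ℝ} {c d : ℤ} (hy : y ∈ Set.Ioo (c : ℝ) d) : ⌊y⌋ ∈ Set.Ico c d :=
    ⟨Int.le_floor.mpr hy.1.le, Int.floor_lt.mpr hy.2⟩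
  exact mem_cellUnion.mpr
    ⟨q, ⟨hqx ▸ floor_mem hp.1, hql ▸ floor_mem hp.2.1, hqu ▸ floor_mem hp.2.2⟩, hpq⟩

/-- The vertices of the hexagonal box with the given sides. -/
def boxVertices (b : ℕ) (x₀ x₁ l₀ l₁ u₀ u₁ : ℤ) : Set Pt :=
  {latticePt b x₀ (u₀ - x₀ / 2), latticePt b (u₀ - l₀) ((l₀ + u₀) / 2),
    latticePt b x₁ (l₀ + x₁ / 2), latticePt b x₀ (l₁ + x₀ / 2),
    latticePt b (u₁ - l₁) ((l₁ + u₁) / 2), latticePt b x₁ (u₁ - x₁ / 2)}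

theorem convexHull_boxVertices {x₀ x₁ l₀ l₁ u₀ u₁ : ℤ} (h₁ : u₀ - l₁ ≤ x₀)
    (h₂ : x₁ ≤ u₁ - l₀) (h₃ : u₀ - l₀ ∈ Set.Icc x₀ x₁) (h₄ : u₁ - l₁ ∈ Set.Icc x₀ x₁)
    (hne : (boxCells x₀ x₁ l₀ l₁ u₀ u₁).Nonempty) :
    convexHull ℝ (boxVertices b x₀ x₁ l₀ l₁ u₀ u₁) =
      cellUnion b (boxCells x₀ x₁ l₀ l₁ u₀ u₁) := by
  rw [← hexBox_eq_cellUnion hne]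
  refine (convexHull_min ?_
    (convex_hexBox (convex_Icc _ _) (convex_Icc _ _) (convex_Icc _ _))).antisymm
    (hexBox_subset_of_convex (convex_convexHull ℝ _) ?_ ?_ ?_ ?_ ?_ ?_)
  · rw [Set.mem_Icc] at h₃ h₄
    rify at h₁ h₂ h₃ h₄
    rintro _ (rfl | rfl | rfl | rfl | rfl | rfl) <;> rw [latticePt_mem_hexBox] <;>
      simp only [Set.mem_Icc] <;> grind
  all_goals exact subset_convexHull ℝ _ (by simp [boxVertices])

end Triangles

section Lozenges

variable {b : ℕ} {p u v e : Pt} {m n : ℤ}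

/-- The rhombus at the vertex `p` spanned by `u` and `v`. -/
def rhombus (p u v : Pt) : Set Pt := convexHull ℝ {p, p + u, p + v, p + u + v}

theorem rhombus_comm (p u v : Pt) : rhombus p u v = rhombus p v u := by
  rw [rhombus, rhombus, Set.insert_comm (p + u), add_right_comm]

theorem rhombus_neg (p u v : Pt) : rhombus p (-u) v = rhombus (p - u) u v := by
  rw [rhombus, rhombus, Set.insert_comm p, sub_add_cancel, ← sub_eq_add_neg, sub_add_eq_add_sub,
    add_sub_right_comm, sub_add_eq_add_sub, Set.pair_comm (p + v)]

/-- The lattice unit vectors pointing to the upper right, up, and to the lower right. Together with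
their negatives these are all unit vectors of the lattice. -/
def latticeVec : Fin 3 → Pt := ![(s3 / 2, 1 / 2), (0, 1), (s3 / 2, -(1 / 2))]

theorem mem_unitVecs : u ∈ unitVecs ↔ ∃ i, u = latticeVec i ∨ u = -latticeVec i := by
  simp only [unitVecs, latticeVec, Set.mem_insert_iff, Set.mem_singleton_iff, Fin.exists_fin_succ,
    Matrix.cons_val_zero, Matrix.cons_val_succ, Prod.neg_mk, neg_neg, neg_zero, IsEmpty.exists_iff]
  grind

theorem latticeVec_ne_neg (i j : Fin 3) : latticeVec i ≠ -latticeVec j := by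
  have hs : 0 < s3 := by simp [s3]
  fin_cases i <;> fin_cases j <;> simp [latticeVec, Prod.ext_iff] <;> grind

theorem latticeVec_injective : Function.Injective latticeVec := by
  intro i j h
  have hs := s3_ne_zero
  fin_cases i <;> fin_cases j <;> simp [latticeVec, Prod.ext_iff] at h ⊢ <;> grind

theorem mem_triLattice (b : ℕ) :
    p ∈ triLattice ↔ ∃ m n : ℤ, p = latticePt b m (m / 2 + n) := by
  have hpt (m n : ℤ) :
      latticePt b m (m / 2 + n) = ((m : ℝ) * (s3 / 2), (m : ℝ) / 2 + (b + n : ℤ)) := by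
    simp only [latticePt, Prod.mk.injEq, true_and]
    push_cast
    ring
  simp only [hpt]
  refine exists_congr fun m ↦ ⟨fun ⟨n, h⟩ ↦ ⟨n - b, by simpa using h⟩, fun ⟨n, h⟩ ↦ ⟨_, h⟩⟩

theorem latticePt_add_latticeVec (x h : ℝ) (i : Fin 3) : latticePt b x h + latticeVec i =
    latticePt b (x + ![1, 0, 1] i) (h + ![1 / 2, 1, -(1 / 2)] i) := by
  fin_cases i <;> simp [latticePt, latticeVec, add_mul, add_assoc]

theorem sub_latticeVec_mem_triLattice (hp : p ∈ triLattice) (i : Fin 3) :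
    p - latticeVec i ∈ triLattice := by
  obtain ⟨m, n, rfl⟩ := hp
  fin_cases i
  · exact ⟨m - 1, n, by ext <;> simp [latticeVec] <;> ring⟩
  · exact ⟨m, n - 1, by ext <;> simp [latticeVec]; ring⟩
  · exact ⟨m - 1, n + 1, by ext <;> simp [latticeVec] <;> ring⟩

theorem exists_rhombus_eq (hp : p ∈ triLattice) (hu : u ∈ unitVecs) :
    ∃ p' ∈ triLattice, ∃ i, (u = latticeVec i ∨ u = -latticeVec i) ∧
      ∀ v, rhombus p u v = rhombus p' (latticeVec i) v := by
  obtain ⟨i, rfl | rfl⟩ := mem_unitVecs.mp hu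
  · exact ⟨p, hp, i, .inl rfl, fun _ ↦ rfl⟩
  · exact ⟨_, sub_latticeVec_mem_triLattice hp i, i, .inr rfl, rhombus_neg p _⟩

theorem isLozenge_iff_exists_rhombus {L : Set Pt} :
    IsLozenge L ↔ ∃ p ∈ triLattice, L = rhombus p (latticeVec 0) (latticeVec 1) ∨
      L = rhombus p (latticeVec 1) (latticeVec 2) ∨
      L = rhombus p (latticeVec 0) (latticeVec 2) := by
  constructor
  · rintro ⟨p, u, v, hp, hu, hv, hne, hneg, rfl⟩
    obtain ⟨p', hp', i, hi, h⟩ := exists_rhombus_eq hp hu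
    obtain ⟨p'', hp'', j, hj, h'⟩ := exists_rhombus_eq hp' hv
    have hij : i ≠ j := by
      rintro rfl
      rcases hi with rfl | rfl <;> rcases hj with rfl | rfl <;> simp at hne hneg
    refine ⟨p'', hp'', ?_⟩
    rw [← rhombus, h v, rhombus_comm, h']
    have hpairs : ∀ i j : Fin 3, i ≠ j → (i, j) ∈ [(0, 1), (1, 2), (0, 2)] ∨
        (j, i) ∈ [(0, 1), (1, 2), (0, 2)] := by decide
    rcases hpairs i j hij with hpair | hpair <;>
      simp only [List.mem_cons, List.not_mem_nil, Prod.mk.injEq, or_false] at hpair <;>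
      rcases hpair with ⟨rfl, rfl⟩ | ⟨rfl, rfl⟩ | ⟨rfl, rfl⟩ <;>
      simp only [rhombus_comm p'', true_or, or_true]
  · have isLozenge (p : Pt) (hp : p ∈ triLattice) {i j : Fin 3} (hij : i ≠ j) :
        IsLozenge (rhombus p (latticeVec i) (latticeVec j)) :=
      ⟨p, _, _, hp, mem_unitVecs.mpr ⟨i, .inl rfl⟩, mem_unitVecs.mpr ⟨j, .inl rfl⟩,
        latticeVec_injective.ne hij, latticeVec_ne_neg i j, rfl⟩
    rintro ⟨p, hp, rfl | rfl | rfl⟩ <;> exact isLozenge p hp (by decide)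

theorem rhombus_asc_vert (b : ℕ) (m n : ℤ) :
    rhombus (latticePt b m (m / 2 + n)) (latticeVec 0) (latticeVec 1) =
      cellUnion b (Domino.vert m (m + 2 * n + 1)).cells := by
  have hcells : (Domino.vert m (m + 2 * n + 1)).cells =
      boxCells m (m + 1) n (n + 1) (m + n) (m + n + 2) := by
    ext ⟨i, v⟩
    simp only [Domino.cells, boxCells, lower, upper, Set.mem_insert_iff, Set.mem_singleton_iff,
      Prod.mk.injEq, Set.mem_ofPred_eq, Set.mem_Ico]
    omega
  rw [hcells, ← convexHull_boxVertices (by omega) (by omega) ⟨by omega, by omega⟩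
    ⟨by omega, by omega⟩ (hcells ▸ ⟨_, .inl rfl⟩), rhombus]
  congr 1
  ext p
  simp only [boxVertices, latticePt_add_latticeVec, Matrix.cons_val, Set.mem_insert_iff,
    Set.mem_singleton_iff]
  push_cast
  ring_nf
  tauto

theorem rhombus_vert_desc (b : ℕ) (m n : ℤ) :
    rhombus (latticePt b m (m / 2 + n)) (latticeVec 1) (latticeVec 2) =
      cellUnion b (Domino.vert m (m + 2 * n)).cells := by
  have hcells : (Domino.vert m (m + 2 * n)).cells =
      boxCells m (m + 1) (n - 1) (n + 1) (m + n) (m + n + 1) := by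
    ext ⟨i, v⟩
    simp only [Domino.cells, boxCells, lower, upper, Set.mem_insert_iff, Set.mem_singleton_iff,
      Prod.mk.injEq, Set.mem_ofPred_eq, Set.mem_Ico]
    omega
  rw [hcells, ← convexHull_boxVertices (by omega) (by omega) ⟨by omega, by omega⟩
    ⟨by omega, by omega⟩ (hcells ▸ ⟨_, .inl rfl⟩), rhombus]
  congr 1
  ext p
  simp only [boxVertices, latticePt_add_latticeVec, Matrix.cons_val, Set.mem_insert_iff,
    Set.mem_singleton_iff]
  push_cast
  ring_nf
  tauto

theorem rhombus_asc_desc (b : ℕ) (m n : ℤ) :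
    rhombus (latticePt b m (m / 2 + n)) (latticeVec 0) (latticeVec 2) =
      cellUnion b (Domino.horiz (m + 1) (n - 1)).cells := by
  have hcells : (Domino.horiz (m + 1) (n - 1)).cells =
      boxCells m (m + 2) (n - 1) n (m + n) (m + n + 1) := by
    ext ⟨i, v⟩
    simp only [Domino.cells, boxCells, lower, upper, Set.mem_insert_iff, Set.mem_singleton_iff,
      Prod.mk.injEq, Set.mem_ofPred_eq, Set.mem_Ico]
    omega
  rw [hcells, ← convexHull_boxVertices (by omega) (by omega) ⟨by omega, by omega⟩
    ⟨by omega, by omega⟩ (hcells ▸ ⟨_, .inl rfl⟩), rhombus]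
  congr 1
  ext p
  simp only [boxVertices, latticePt_add_latticeVec, Matrix.cons_val, Set.mem_insert_iff,
    Set.mem_singleton_iff]
  push_cast
  ring_nf
  tauto

/-- The lozenge covered by the triangles of the two cells of a domino. -/
def lozenge (b : ℕ) (t : Domino) : Set Pt := cellUnion b t.cells

theorem isLozenge_iff (b : ℕ) {L : Set Pt} : IsLozenge L ↔ L ∈ Set.range (lozenge b) := by
  have int_div_two (w : ℤ) : ∃ n, w = 2 * n ∨ w = 2 * n + 1 := ⟨w / 2, by omega⟩
  rw [isLozenge_iff_exists_rhombus, Set.mem_range]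
  constructor
  · rintro ⟨p, hp, hL⟩
    obtain ⟨m, n, rfl⟩ := (mem_triLattice b).mp hp
    rw [rhombus_asc_vert, rhombus_vert_desc, rhombus_asc_desc] at hL
    rcases hL with rfl | rfl | rfl <;> exact ⟨_, rfl⟩
  · rintro ⟨⟨m, v⟩ | ⟨m, n⟩, rfl⟩
    · obtain ⟨n, hn | hn⟩ := int_div_two (v - m)
      · refine ⟨_, (mem_triLattice b).mpr ⟨m, n, rfl⟩, .inr (.inl ?_)⟩
        rw [rhombus_vert_desc, ← hn, add_sub_cancel, lozenge]
      · refine ⟨_, (mem_triLattice b).mpr ⟨m, n, rfl⟩, .inl ?_⟩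
        rw [rhombus_asc_vert, add_assoc, ← hn, add_sub_cancel, lozenge]
    · refine ⟨_, (mem_triLattice b).mpr ⟨m - 1, n + 1, rfl⟩, .inr (.inr ?_)⟩
      rw [rhombus_asc_desc, sub_add_cancel, add_sub_cancel_right, lozenge]

end Lozenges

/-! ### The region with holes and its tilings -/

section Region

variable {a b s A : ℕ} {k : Fin s → ℕ} {p : Pt}

/-- The cells of the hexagon with side lengths `A, A, 2b, A, A, 2b`. -/
def hexagonCells (A b : ℕ) : Set (ℤ × ℤ) := boxCells 0 (2 * A) (-A - b) b (-b) (b + A)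

/-- The cells of the left-pointing hole with vertical side at distance `2k`. -/
def leftHoleCells (k : ℕ) : Set (ℤ × ℤ) :=
  boxCells (2 * k - 2) (2 * k) (-k - 1) (-k + 1) (k - 1) (k + 1)

/-- The cells of the mirror image of the left-pointing hole with vertical side at distance `2k`. -/
def rightHoleCells (A k : ℕ) : Set (ℤ × ℤ) :=
  boxCells (2 * A - 2 * k) (2 * A - 2 * k + 2) (-A + k - 1) (-A + k + 1) (A - k - 1) (A - k + 1)

/-- The cells of the holes of `Hreg A b s k`, indexed by the left and the right holes. -/
def holeCells (A : ℕ) (k : Fin s → ℕ) : Fin s ⊕ Fin s → Set (ℤ × ℤ) :=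
  Sum.elim (fun i ↦ leftHoleCells (k i)) fun i ↦ rightHoleCells A (k i)

theorem zero_mem_hexagonCells (hA : 0 < A) (hb : 0 < b) : (0, 0) ∈ hexagonCells A b := by
  simp only [hexagonCells, boxCells, lower, upper, Set.mem_ofPred_eq, Set.mem_Ico]
  omega

theorem mem_leftHoleCells {k : ℕ} {m v : ℤ} : (m, v) ∈ leftHoleCells k ↔
    m = 2 * k - 2 ∧ v = 0 ∨ m = 2 * k - 1 ∧ |v| ≤ 1 := by
  simp only [leftHoleCells, boxCells, lower, upper, Set.mem_ofPred_eq, Set.mem_Ico, abs_le]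
  omega

theorem mem_rightHoleCells {k : ℕ} {m v : ℤ} : (m, v) ∈ rightHoleCells A k ↔
    m = 2 * A - 2 * k + 1 ∧ v = 0 ∨ m = 2 * A - 2 * k ∧ |v| ≤ 1 := by
  simp only [rightHoleCells, boxCells, lower, upper, Set.mem_ofPred_eq, Set.mem_Ico, abs_le]
  omega

theorem hexagon_eq_cellUnion (hA : 0 < A) (hb : 0 < b) :
    hexagon A b = cellUnion b (hexagonCells A b) := by
  rw [hexagonCells, ← convexHull_boxVertices (by omega) (by omega) ⟨by omega, by omega⟩
    ⟨by omega, by omega⟩ ⟨_, zero_mem_hexagonCells hA hb⟩, hexagon]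
  congr 1
  ext p
  simp only [boxVertices, latticePt, Set.mem_insert_iff, Set.mem_singleton_iff]
  push_cast
  ring_nf
  tauto

theorem leftHole_eq_cellUnion (b k : ℕ) : leftHole b k = cellUnion b (leftHoleCells k) := by
  rw [leftHoleCells, ← convexHull_boxVertices (by omega) (by omega) ⟨by omega, by omega⟩
    ⟨by omega, by omega⟩ ⟨_, mem_leftHoleCells.mpr (.inl ⟨rfl, rfl⟩)⟩, leftHole]
  congr 1
  ext p
  simp only [boxVertices, latticePt, Set.mem_insert_iff, Set.mem_singleton_iff]
  push_cast
  ring_nf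
  tauto

theorem rightHole_eq_cellUnion (A b k : ℕ) :
    rightHole A b k = cellUnion b (rightHoleCells A k) := by
  rw [rightHoleCells, ← convexHull_boxVertices (by omega) (by omega) ⟨by omega, by omega⟩
    ⟨by omega, by omega⟩ ⟨_, mem_rightHoleCells.mpr (.inl ⟨rfl, rfl⟩)⟩, rightHole]
  congr 1
  ext p
  simp only [boxVertices, latticePt, Set.mem_insert_iff, Set.mem_singleton_iff]
  push_cast
  ring_nf
  tauto

theorem cellUnion_boxCells_subset_interior {x₀ x₁ l₀ l₁ u₀ u₁ y₀ y₁ m₀ m₁ w₀ w₁ : ℤ}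
    (hne : (boxCells y₀ y₁ m₀ m₁ w₀ w₁).Nonempty) (hne' : (boxCells x₀ x₁ l₀ l₁ u₀ u₁).Nonempty)
    (hx : x₀ < y₀ ∧ y₁ < x₁) (hl : l₀ < m₀ ∧ m₁ < l₁) (hu : u₀ < w₀ ∧ w₁ < u₁) :
    cellUnion b (boxCells y₀ y₁ m₀ m₁ w₀ w₁) ⊆
      interior (cellUnion b (boxCells x₀ x₁ l₀ l₁ u₀ u₁)) := by
  have Icc_subset {c d c' d' : ℤ} (h : c < c' ∧ d' < d) :
      Set.Icc (c' : ℝ) d' ⊆ Set.Ioo (c : ℝ) d :=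
    Set.Icc_subset_Ioo (mod_cast h.1) (mod_cast h.2)
  rw [← hexBox_eq_cellUnion hne, ← hexBox_eq_cellUnion hne', interior_hexBox]
  simp only [interior_Icc]
  exact fun _ hp ↦ ⟨Icc_subset hx hp.1, Icc_subset hl hp.2.1, Icc_subset hu hp.2.2⟩

theorem cellUnion_holeCells_subset (hb : 0 < b) (hk2 : ∀ i, 2 ≤ k i) (hka : ∀ i, k i < a)
    (i : Fin s ⊕ Fin s) : cellUnion b (holeCells (2 * a) k i) ⊆
      interior (cellUnion b (hexagonCells (2 * a) b)) := by
  rcases i with i | i <;> have := hk2 i <;> have := hka i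
  · exact cellUnion_boxCells_subset_interior ⟨_, mem_leftHoleCells.mpr (.inl ⟨rfl, rfl⟩)⟩
      ⟨_, zero_mem_hexagonCells (by omega) hb⟩ (by omega) (by omega) (by omega)
  · exact cellUnion_boxCells_subset_interior ⟨_, mem_rightHoleCells.mpr (.inl ⟨rfl, rfl⟩)⟩
      ⟨_, zero_mem_hexagonCells (by omega) hb⟩ (by omega) (by omega) (by omega)

theorem hexagonCells_sdiff_holeCells (hka : ∀ i, k i ≤ a) :
    hexagonCells (2 * a) b \ ⋃ i, holeCells (2 * a) k i = cellRegion a b (univ.image k) := by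
  have hhex (m v : ℤ) : (m, v) ∈ hexagonCells (2 * a) b ↔
      0 ≤ depth a m ∧ |v| ≤ 2 * b + depth a m := by
    simp only [hexagonCells, boxCells, lower, upper, depth, Set.mem_ofPred_eq, Set.mem_Ico, abs_le]
    omega
  have hhole (m v : ℤ) (i : Fin s) (hm : 0 ≤ depth a m) :
      (m, v) ∉ leftHoleCells (k i) ∧ (m, v) ∉ rightHoleCells (2 * a) (k i) ↔
        ¬(depth a m = 2 * k i - 2 ∧ v = 0) ∧ ¬(depth a m = 2 * k i - 1 ∧ |v| ≤ 1) := by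
    have := hka i
    simp only [depth] at hm ⊢
    rw [mem_leftHoleCells, mem_rightHoleCells]
    omega
  ext ⟨m, v⟩
  simp only [Set.mem_sdiff, hhex, Set.mem_iUnion, not_exists, Sum.forall, holeCells, Sum.elim_inl,
    Sum.elim_inr, cellRegion, Set.mem_ofPred_eq, mem_image, mem_univ, true_and,
    forall_exists_index, forall_apply_eq_imp_iff, and_assoc, ← forall_and]
  exact and_congr_right fun hm ↦ and_congr_right fun _ ↦ forall_congr' fun i ↦ hhole m v i hm

theorem latticePt_mem_leftHole {k : ℕ} {x h : ℝ} :
    latticePt b x h ∈ cellUnion b (leftHoleCells k) ↔ x ∈ Set.Icc (2 * k - 2 : ℝ) (2 * k) ∧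
      h - x / 2 ∈ Set.Icc (-k - 1 : ℝ) (-k + 1) ∧ h + x / 2 ∈ Set.Icc (k - 1 : ℝ) (k + 1) := by
  rw [leftHoleCells, ← hexBox_eq_cellUnion ⟨_, mem_leftHoleCells.mpr (.inl ⟨rfl, rfl⟩)⟩,
    latticePt_mem_hexBox]
  push_cast
  rfl

theorem latticePt_mem_rightHole {k : ℕ} {x h : ℝ} :
    latticePt b x h ∈ cellUnion b (rightHoleCells A k) ↔
      x ∈ Set.Icc (2 * A - 2 * k : ℝ) (2 * A - 2 * k + 2) ∧
      h - x / 2 ∈ Set.Icc (-A + k - 1 : ℝ) (-A + k + 1) ∧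
      h + x / 2 ∈ Set.Icc (A - k - 1 : ℝ) (A - k + 1) := by
  rw [rightHoleCells, ← hexBox_eq_cellUnion ⟨_, mem_rightHoleCells.mpr (.inl ⟨rfl, rfl⟩)⟩,
    latticePt_mem_hexBox]
  push_cast
  rfl

theorem triangle_subset_of_depth_even {K : Finset ℕ} {m : ℤ} (hb : 0 < b)
    (hm : 0 ≤ depth a m) (heven : Even (depth a m)) :
    triangle b (m, 1) ⊆ cellUnion b (cellRegion a b K) := by
  refine triangle_subset_cellUnion ?_
  simp only [cellRegion, Set.mem_ofPred_eq, abs_one]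
  refine ⟨hm, by omega, fun k _ ↦ ⟨by omega, ?_⟩⟩
  grind

/-- Two left holes meet at most in the tip of the right one, which is a vertex of a triangle above
the axis that remains. -/
theorem leftHole_inter_subset {k k' : ℕ} (hb : 0 < b) (hkk : k < k') (hk' : k' < a)
    (K : Finset ℕ) :
    cellUnion b (leftHoleCells k) ∩ cellUnion b (leftHoleCells k') ⊆
      cellUnion b (cellRegion a b K) := by
  rintro p ⟨hp, hp'⟩
  obtain ⟨x, h, rfl⟩ := exists_latticePt b p
  rw [latticePt_mem_leftHole] at hp hp'
  have hdepth : depth a (2 * k) = 2 * k := by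
    simp only [depth]
    omega
  refine triangle_subset_of_depth_even (m := 2 * k) hb (by omega) (by simp [hdepth]) ?_
  have hlower : lower (2 * k, 1) = -k := by
    simp only [lower]
    omega
  simp only [latticePt_mem_triangle, upper, hlower, Set.mem_Icc] at hp hp' ⊢
  have hkk : (k : ℝ) + 1 ≤ k' := mod_cast hkk
  push_cast
  grind

theorem rightHole_inter_subset {k k' : ℕ} (hb : 0 < b) (hkk : k < k') (hk' : k' < a)
    (K : Finset ℕ) :
    cellUnion b (rightHoleCells (2 * a) k) ∩ cellUnion b (rightHoleCells (2 * a) k') ⊆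
      cellUnion b (cellRegion a b K) := by
  rintro p ⟨hp, hp'⟩
  obtain ⟨x, h, rfl⟩ := exists_latticePt b p
  rw [latticePt_mem_rightHole] at hp hp'
  have hdepth : depth a (4 * a - 1 - 2 * k) = 2 * k := by
    simp only [depth]
    omega
  refine triangle_subset_of_depth_even (m := 4 * a - 1 - 2 * k) hb (by omega) (by simp [hdepth]) ?_
  have hlower : lower (4 * a - 1 - 2 * k, 1) = k - 2 * a := by
    simp only [lower]
    omega
  simp only [latticePt_mem_triangle, upper, hlower, Set.mem_Icc] at hp hp' ⊢
  have hkk : (k : ℝ) + 1 ≤ k' := mod_cast hkk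
  push_cast at hp hp' ⊢
  grind

theorem disjoint_leftHole_rightHole {k k' : ℕ} (hk : k < a) (hk' : k' < a) :
    Disjoint (cellUnion b (leftHoleCells k)) (cellUnion b (rightHoleCells (2 * a) k')) := by
  refine Set.disjoint_left.mpr fun p hp hp' ↦ ?_
  obtain ⟨x, h, rfl⟩ := exists_latticePt b p
  have hx := (latticePt_mem_leftHole.mp hp).1.2
  have hx' := (latticePt_mem_rightHole.mp hp').1.1
  rify at hk hk'
  push_cast at hx'
  linarith

theorem cellUnion_holeCells_inter_subset (hb : 0 < b) (hk : Function.Injective k)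
    (hka : ∀ i, k i < a) {i j : Fin s ⊕ Fin s} (hij : i ≠ j) (K : Finset ℕ) :
    cellUnion b (holeCells (2 * a) k i) ∩ cellUnion b (holeCells (2 * a) k j) ⊆
      cellUnion b (cellRegion a b K) := by
  rcases i with i | i <;> rcases j with j | j <;>
    simp only [holeCells, Sum.elim_inl, Sum.elim_inr]
  · rcases (hk.ne (ne_of_apply_ne _ hij)).lt_or_gt with h | h
    · exact leftHole_inter_subset hb h (hka j) K
    · exact Set.inter_comm _ _ ▸ leftHole_inter_subset hb h (hka i) K
  · simp [(disjoint_leftHole_rightHole (hka i) (hka j)).inter_eq]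
  · simp [(disjoint_leftHole_rightHole (hka j) (hka i)).symm.inter_eq]
  · rcases (hk.ne (ne_of_apply_ne _ hij)).lt_or_gt with h | h
    · exact rightHole_inter_subset hb h (hka j) K
    · exact Set.inter_comm _ _ ▸ rightHole_inter_subset hb h (hka i) K

theorem Hreg_eq_cellUnion (ha : 0 < a) (hb : 0 < b) (hk : Function.Injective k)
    (hk2 : ∀ i, 2 ≤ k i) (hka : ∀ i, k i < a) :
    Hreg (2 * a) b s k = cellUnion b (cellRegion a b (univ.image k)) := by
  have hcells : _ = cellRegion a b (univ.image k) :=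
    hexagonCells_sdiff_holeCells fun i ↦ (hka i).le
  have hdiff := cellUnion_sdiff_iUnion_interior (finite_boxCells ..)
    (cellUnion_holeCells_subset hb hk2 hka) fun i j hij ↦
      (cellUnion_holeCells_inter_subset hb hk hka hij _).trans_eq
        (congrArg (cellUnion b) hcells.symm)
  rw [← hcells, Hreg, hexagon_eq_cellUnion (by omega) hb]
  refine Eq.trans ?_ hdiff
  simp only [leftHole_eq_cellUnion, rightHole_eq_cellUnion, holeCells, Set.iUnion_sum,
    Set.iUnion_union_distrib, Sum.elim_inl, Sum.elim_inr]
  rfl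

end Region

section Tilings

variable {a b : ℕ} {K : Finset ℕ} {S : Set Domino} {t t' : Domino}

theorem reflV_latticePt (A b : ℕ) (x h : ℝ) :
    reflV A (latticePt b x h) = latticePt b (2 * A - x) h := by
  ext
  · simp only [reflV, latticePt]
    ring
  · rfl

theorem rot180_latticePt (A b : ℕ) (x h : ℝ) :
    rot180 A b (latticePt b x h) = latticePt b (2 * A - x) (-h) := by
  ext <;> simp only [rot180, latticePt] <;> ring

theorem reflV_involutive (A : ℕ) : Function.Involutive (reflV A) := fun p ↦ by
  simp [reflV]

theorem rot180_involutive (A b : ℕ) : Function.Involutive (rot180 A b) := fun p ↦ by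
  simp [rot180]

theorem reflV_mem_triangle {m v : ℤ} {p : Pt} :
    reflV (2 * a) p ∈ triangle b (4 * a - 1 - m, v) ↔ p ∈ triangle b (m, v) := by
  obtain ⟨x, h, rfl⟩ := exists_latticePt b p
  have hlower : lower (4 * a - 1 - m, v) = upper (m, v) - 2 * a := by
    simp only [upper, lower]
    omega
  have hupper : upper (4 * a - 1 - m, v) = lower (m, v) + 2 * a := by
    simp only [upper, lower]
    omega
  simp only [reflV_latticePt, latticePt_mem_triangle, hlower, hupper, Set.mem_Icc]
  push_cast
  grind

theorem rot180_mem_triangle {m v : ℤ} {p : Pt} :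
    rot180 (2 * a) b p ∈ triangle b (4 * a - 1 - m, v) ↔ p ∈ triangle b (m, -v) := by
  obtain ⟨x, h, rfl⟩ := exists_latticePt b p
  have hlower : lower (4 * a - 1 - m, v) = -2 * a - 1 - lower (m, -v) := by
    simp only [lower]
    omega
  have hupper : upper (4 * a - 1 - m, v) = 2 * a - 1 - upper (m, -v) := by
    simp only [upper, lower]
    omega
  simp only [rot180_latticePt, latticePt_mem_triangle, hlower, hupper, Set.mem_Icc]
  push_cast
  grind

theorem image_lozenge {f : Pt → Pt} (hf : f.Involutive) {σ : ℤ × ℤ → ℤ × ℤ}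
    (hσ : σ.Involutive) (htri : ∀ p q, f p ∈ triangle b (σ q) ↔ p ∈ triangle b q)
    (hcells : ∀ q, q ∈ t'.cells ↔ σ q ∈ t.cells) : f '' lozenge b t = lozenge b t' := by
  ext p
  rw [hf.image_eq_preimage_symm, Set.mem_preimage]
  simp only [lozenge, mem_cellUnion, hcells]
  constructor
  · rintro ⟨q, hq, hp⟩
    exact ⟨σ q, by rwa [hσ], by rwa [← htri, hσ]⟩
  · rintro ⟨q, hq, hp⟩
    exact ⟨σ q, hq, by rwa [htri]⟩

theorem image_reflV_lozenge (a b : ℕ) (t : Domino) :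
    reflV (2 * a) '' lozenge b t = lozenge b (t.mirror a) :=
  image_lozenge (reflV_involutive _) (σ := fun q ↦ (4 * a - 1 - q.1, q.2)) (fun q ↦ by simp)
    (fun _ _ ↦ reflV_mem_triangle) fun _ ↦ mem_cells_mirror

theorem image_rot180_lozenge (a b : ℕ) (t : Domino) :
    rot180 (2 * a) b '' lozenge b t = lozenge b (t.mirror a).flip :=
  image_lozenge (rot180_involutive _ _) (σ := fun q ↦ (4 * a - 1 - q.1, -q.2)) (fun q ↦ by simp)
    (fun p q ↦ by rw [rot180_mem_triangle, neg_neg]) fun _ ↦ mem_cells_flip.trans mem_cells_mirror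

theorem cells_injective : Function.Injective cells := by
  rintro (⟨m, v⟩ | ⟨m, n⟩) (⟨m', v'⟩ | ⟨m', n'⟩) h <;>
    simp only [cells, Set.pair_eq_pair_iff, Prod.mk.injEq] at h <;> grind

theorem lozenge_injective (b : ℕ) : Function.Injective (lozenge b) :=
  (cellUnion_injective b).comp cells_injective

theorem isLozengeTiling_image_iff {Q : Set (ℤ × ℤ)} :
    IsLozengeTiling (cellUnion b Q) (lozenge b '' S) ↔
      (∀ t ∈ S, t.cells ⊆ Q) ∧ ∀ p ∈ Q, ∃! t, t ∈ S ∧ p ∈ t.cells := by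
  have hcover : ⋃₀ (lozenge b '' S) = cellUnion b Q ↔ ⋃ t ∈ S, t.cells = Q := by
    rw [Set.sUnion_image, ← (cellUnion_injective b).eq_iff, cellUnion_iUnion]
    rfl
  have hdisjoint : (∀ L ∈ lozenge b '' S, ∀ L' ∈ lozenge b '' S, L ≠ L' →
      interior L ∩ interior L' = ∅) ↔ ∀ t ∈ S, ∀ t' ∈ S, t ≠ t' → Disjoint t.cells t'.cells := by
    simp only [Set.forall_mem_image, lozenge, disjoint_interior_cellUnion,
      (cellUnion_injective b).ne_iff, cells_injective.ne_iff]
  have hloz : ∀ L ∈ lozenge b '' S, IsLozenge L := by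
    rintro _ ⟨t, -, rfl⟩
    exact (isLozenge_iff b).mpr ⟨t, rfl⟩
  rw [IsLozengeTiling, hcover, hdisjoint]
  constructor
  · rintro ⟨-, rfl, hdisj⟩
    refine ⟨fun t ht ↦ Set.subset_biUnion_of_mem ht, fun p hp ↦ ?_⟩
    obtain ⟨t, ht, hpt⟩ := Set.mem_iUnion₂.mp hp
    refine ⟨t, ⟨ht, hpt⟩, fun t' ⟨ht', hpt'⟩ ↦ ?_⟩
    by_contra hne
    exact Set.disjoint_left.mp (hdisj _ ht' _ ht hne) hpt' hpt
  · rintro ⟨hsub, huniq⟩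
    refine ⟨hloz, (Set.iUnion₂_subset hsub).antisymm fun p hp ↦ ?_, fun t ht t' ht' hne ↦ ?_⟩
    · obtain ⟨t, ⟨ht, hpt⟩, -⟩ := huniq p hp
      exact Set.mem_iUnion₂.mpr ⟨t, ht, hpt⟩
    · exact Set.disjoint_left.mpr fun p hp hp' ↦
        hne ((huniq p (hsub t ht hp)).unique ⟨ht, hp⟩ ⟨ht', hp'⟩)

theorem symmTiling_image_iff :
    (IsLozengeTiling (cellUnion b (cellRegion a b K)) (lozenge b '' S) ∧
      RotInvariant (2 * a) b (lozenge b '' S) ∧ ReflInvariant (2 * a) (lozenge b '' S)) ↔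
      IsSymmMatching a b K S := by
  have hrefl : ReflInvariant (2 * a) (lozenge b '' S) ↔ ∀ t ∈ S, t.mirror a ∈ S := by
    simp only [ReflInvariant, Set.forall_mem_image, image_reflV_lozenge,
      (lozenge_injective b).mem_set_image]
  have hrot : RotInvariant (2 * a) b (lozenge b '' S) ↔ ∀ t ∈ S, (t.mirror a).flip ∈ S := by
    simp only [RotInvariant, Set.forall_mem_image, image_rot180_lozenge,
      (lozenge_injective b).mem_set_image]
  rw [isLozengeTiling_image_iff, hrefl, hrot]
  constructor
  · rintro ⟨⟨hsub, huniq⟩, hrot, hrefl⟩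
    refine ⟨hsub, huniq, fun t ht ↦ ?_, hrefl⟩
    simpa only [mirror_mirror] using hrot _ (hrefl t ht)
  · rintro ⟨hsub, huniq, hflip, hmirror⟩
    exact ⟨⟨hsub, huniq⟩, fun t ht ↦ hflip _ (hmirror t ht), hmirror⟩

theorem MrotRefl_cellUnion (a b : ℕ) (K : Finset ℕ) :
    MrotRefl (2 * a) b (cellUnion b (cellRegion a b K)) =
      Nat.card {S // IsSymmMatching a b K S} := by
  refine (Nat.card_congr (.ofBijective
    (fun S ↦ ⟨lozenge b '' S, symmTiling_image_iff.mpr S.2⟩) ⟨fun S S' h ↦ ?_, fun T ↦ ?_⟩)).symm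
  · exact Subtype.ext ((lozenge_injective b).image_injective (congrArg Subtype.val h))
  · have hT : lozenge b '' (lozenge b ⁻¹' T) = T :=
      Set.image_preimage_eq_of_subset fun L hL ↦ (isLozenge_iff b).mp (T.2.1.1 L hL)
    exact ⟨⟨_, symmTiling_image_iff.mp (hT.symm ▸ T.2)⟩, Subtype.ext hT⟩

end Tilings

end PP

open PP in
/-- Equation (3.7): the product formula for
`M_{⊙,|}(H_{2a,2b}(k_1,…,k_s))`, where `q_1 < ⋯ < q_{a−s}` enumerates
`{1,…,a} \ {a−k_1+1, …, a−k_s+1}`: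
`M_{⊙,|} = ∏_j C(a+b+q_j−1, 2q_j−1) · ∏_{j<k} (q_k−q_j)/(q_j+q_k−1)`. -/
theorem MrotRefl_Hreg_even_eq_product (a b s : ℕ) (ha : 0 < a) (hb : 0 < b) (hs : 0 < s)
    (hsa : s < a) (k : Fin s → ℕ) (hmono : StrictMono k)
    (hk2 : ∀ i, 2 ≤ k i) (hka : ∀ i, k i ≤ a - 1)
    (q : Fin (a - s) → ℕ) (hq : StrictMono q)
    (hqrange : Finset.image q Finset.univ
      = Finset.Icc 1 a \ Finset.image (fun i => a - k i + 1) Finset.univ) :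
    (MrotRefl (2 * a) b (Hreg (2 * a) b s k) : ℚ)
      = (∏ j : Fin (a - s), ((a + b + q j - 1).choose (2 * q j - 1) : ℚ))
        * ∏ p ∈ Finset.univ.filter (fun p : Fin (a - s) × Fin (a - s) => p.1 < p.2),
            ((q p.2 : ℚ) - (q p.1 : ℚ)) / ((q p.1 : ℚ) + (q p.2 : ℚ) - 1) := by
  have hka' (i : Fin s) : k i < a := by
    have := hka i
    omega
  have hrows : rowSet (Finset.univ.image k) a = Finset.univ.image q := by
    rw [hqrange]
    ext x
    have hiff (i : Fin s) (hx : x ≤ a) : k i = a + 1 - x ↔ a - k i + 1 = x := by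
      have := hka' i
      omega
    grind [rowSet]
  rw [Hreg_eq_cellUnion ha hb hmono.injective hk2 hka', MrotRefl_cellUnion, card_isSymmMatching,
    card_chains, hrows, Finset.prod_image hq.injective.injOn, pairProd_image rowFactor hq,
    pairProd, Finset.univ_product_univ]
  rfl
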